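/- arXiv:2203.04068 — 6 statements merged into one kernel-verified Lean document; each statement's English description precedes it below -/
import Mathlib

section
/- Let q = 2^k and let K = F_q((u)) be the field of formal Laurent series over the finite field F_q (a local field of characteristic 2). Let a_1, a_2, a_3, a_4 in K with a_1 and a_3 nonzero. The quadratic form a_1 x_1^2 + a_1 x_1 x_2 + a_1 a_2 x_2^2 + a_3 x_3^2 + a_3 x_3 x_4 + a_3 a_4 x_4^2 has no nontrivial zero in K^4 if and only if all of the following hold: the polynomial X^2 + X + a_2 has no root in K, the polynomial X^2 + X + (a_2 + a_4) has a root in K, and exactly one of a_1, a_3 can be written as x^2 + x y + a_2 y^2 with x, y in K. -/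
/-!
Write `℘(z) = z² + z` and `G c` for the set of values of the norm form `x² + xy + cy²`.
The set `G c` is multiplicative and depends only on the class of `c` modulo `℘(K)`, and for a
fixed `b` the set of `c` with `b ∈ G c` is closed under addition. This is the bimultiplicativity
of the Artin–Schreier symbol `[c, b)`, obtained from explicit identities.

For `K = Fq((u))` fix a constant `r ∈ Fq` outside `℘(Fq)`. The arithmetic input is:
* every `c` is congruent modulo `℘(K)` to `0`, to `r`, or to an element whose order is odd and
  negative (`artinSchreier_induction`, which rests on `℘` being onto `u Fq[[u]]`);
* elements of even order lie in `G r`, elements of odd order do not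
  (`isNorm_unram_of_even`, `not_isNorm_unram_of_odd`);
* if `b` has odd order, then `b ∈ G c` or `b ∈ G (c + r)` (`isNorm_or_of_odd`).

These facts suffice to get the two statements of local class field theory that are needed, without
residues or differentials. First, `G c` has index at most two in `Kˣ` (`isNorm_mul_of_not`): when
`c ≡ c'` with `c'` of odd order, `c'` itself is an element of odd order in `G c`, so one may
assume that the two non-norms have odd order; both then lie in `G (c + r)`, and their product,
being of even order, lies in `G r` as well. Second, if `c`, `d` and `c + d` are not in `℘(K)` then
`G c ≠ G d` (`exists_norm_ne`): otherwise every element of odd order lies in `G (c + d)`, whereas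
for `c + d ≡ e` with `e` of odd negative order the element `e + r` does not, since it lies in
`G (e + r)` and not in `G r`.

The form of the theorem has a nontrivial zero as soon as `a₁ a₃ = p q` with `p ∈ G a₂`, `q ∈ G a₄`
nonzero. If `a₂ + a₄ ∉ ℘(K)`, the two facts give `Kˣ = G a₂ · G a₄`. If `a₂ + a₄ ∈ ℘(K)`, then
`G a₂ = G a₄`, and the form is isotropic exactly when `a₁ a₃ ∈ G a₂`.
-/

namespace QuatForm

open HahnSeries

/-! ### Norm forms in characteristic two -/

section General

variable {K : Type*} [Field K]

/-- `b` is a value of the norm form `x² + xy + cy²` (the value `0` is allowed). -/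
def IsNorm (c b : K) : Prop := ∃ x y : K, b = x ^ 2 + x * y + c * y ^ 2

/-- `c` is in the image of `℘ : z ↦ z² + z`. -/
def IsWp (c : K) : Prop := ∃ z : K, c = z ^ 2 + z

lemma IsWp.zero : IsWp (0 : K) := ⟨0, by ring⟩

lemma IsNorm.sq (c s : K) : IsNorm c (s ^ 2) := ⟨s, 0, by ring⟩

lemma IsNorm.self (c : K) : IsNorm c c := ⟨0, 1, by ring⟩

variable [CharP K 2]


lemma two_eq_zero' : (2 : K) = 0 := CharTwo.two_eq_zero

lemma IsWp.add {c d : K} (hc : IsWp c) (hd : IsWp d) : IsWp (c + d) := by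
  obtain ⟨z, rfl⟩ := hc
  obtain ⟨w, rfl⟩ := hd
  exact ⟨z + w, by linear_combination (-z * w) * two_eq_zero' (K := K)⟩

/-- If `c = z² + z`, the norm form factors as `(x + zy)(x + zy + y)`, so it is universal. -/
lemma IsWp.isNorm {c : K} (hc : IsWp c) (b : K) : IsNorm c b := by
  obtain ⟨z, rfl⟩ := hc
  refine ⟨b + z * (b + 1), b + 1, ?_⟩
  linear_combination
    (-(b ^ 2) - z * (b + 1) ^ 2 - z ^ 2 * (b + 1) ^ 2 - z * b * (b + 1)) * two_eq_zero' (K := K)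

/-- The norm form is multiplicative. -/
lemma IsNorm.mul {c a b : K} (ha : IsNorm c a) (hb : IsNorm c b) : IsNorm c (a * b) := by
  obtain ⟨x, y, rfl⟩ := ha
  obtain ⟨z, w, rfl⟩ := hb
  refine ⟨x * z + c * y * w, x * w + y * z + y * w, ?_⟩
  linear_combination
    (-2 * c * x * y * z * w - c * x * y * w ^ 2 - c * y ^ 2 * z * w - c * y ^ 2 * w ^ 2)
      * two_eq_zero' (K := K)

lemma IsNorm.inv {c b : K} (hb : IsNorm c b) : IsNorm c b⁻¹ := by
  by_cases h : b = 0
  · simpa [h] using hb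
  · have := hb.mul (IsNorm.sq c b⁻¹)
    rwa [show b * b⁻¹ ^ 2 = b⁻¹ by field_simp] at this

lemma IsNorm.of_mul {c g b : K} (hg : IsNorm c g) (h0 : g ≠ 0) (h : IsNorm c (g * b)) :
    IsNorm c b := by
  have := hg.inv.mul h
  rwa [inv_mul_cancel_left₀ h0] at this

lemma IsNorm.of_mul_sq {c b t : K} (ht : t ≠ 0) (h : IsNorm c (b * t ^ 2)) : IsNorm c b :=
  (IsNorm.sq c t).of_mul (pow_ne_zero 2 ht) (by rwa [mul_comm])

/-- `b` is a norm for `c` if and only if `b` is a square or `c ∈ ℘(K) + bK²`. -/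
lemma isNorm_iff {c b : K} : IsNorm c b ↔ (∃ x, b = x ^ 2) ∨ ∃ s, IsWp (c + b * s ^ 2) := by
  constructor
  · rintro ⟨x, y, h⟩
    by_cases hy : y = 0
    · exact Or.inl ⟨x, by simp [h, hy]⟩
    · refine Or.inr ⟨y⁻¹, x / y, ?_⟩
      rw [h]
      field_simp
      linear_combination (c * y ^ 2) * two_eq_zero' (K := K)
  · rintro (⟨x, rfl⟩ | ⟨s, z, h⟩)
    · exact IsNorm.sq c x
    · by_cases hs : s = 0
      · exact IsWp.isNorm ⟨z, by simpa [hs] using h⟩ b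
      · refine IsNorm.of_mul_sq hs ⟨z, 1, ?_⟩
        linear_combination h - c * two_eq_zero' (K := K)

/-- Additivity of the Artin–Schreier symbol in its first argument. -/
lemma IsNorm.add {c d b : K} (hc : IsNorm c b) (hd : IsNorm d b) : IsNorm (c + d) b := by
  rw [isNorm_iff] at *
  rcases hc with h | ⟨s, hs⟩
  · exact Or.inl h
  rcases hd with h | ⟨t, ht⟩
  · exact Or.inl h
  refine Or.inr ⟨s + t, ?_⟩
  have := hs.add ht
  rwa [show c + b * s ^ 2 + (d + b * t ^ 2) = c + d + b * (s + t) ^ 2 by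
    linear_combination (-b * s * t) * two_eq_zero' (K := K)] at this

lemma add_add_self (c d : K) : c + (c + d) = d := by
  linear_combination c * two_eq_zero' (K := K)

lemma IsNorm.congr {c d b : K} (h : IsWp (c + d)) (hc : IsNorm c b) : IsNorm d b := by
  have := hc.add (h.isNorm b)
  rwa [add_add_self] at this

end General

/-! ### Leading terms and parity of the order -/

section Series

variable {F : Type*} [Field F]

/-- `f = a uⁿ + (terms of higher degree)`; the coefficient `a` may be zero. -/
def Lead (n : ℤ) (a : F) (f : LaurentSeries F) : Prop :=
  ∃ p : PowerSeries F, PowerSeries.constantCoeff p = a ∧ f = single n 1 * ofPowerSeries ℤ F p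

lemma Lead.add {n : ℤ} {a b : F} {f g : LaurentSeries F} (hf : Lead n a f) (hg : Lead n b g) :
    Lead n (a + b) (f + g) := by
  obtain ⟨p, rfl, rfl⟩ := hf
  obtain ⟨q, rfl, rfl⟩ := hg
  exact ⟨p + q, by simp, by rw [map_add]; ring⟩

lemma Lead.mul {m n : ℤ} {a b : F} {f g : LaurentSeries F} (hf : Lead m a f) (hg : Lead n b g) :
    Lead (m + n) (a * b) (f * g) := by
  obtain ⟨p, rfl, rfl⟩ := hf
  obtain ⟨q, rfl, rfl⟩ := hg
  refine ⟨p * q, by simp, ?_⟩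
  rw [map_mul, show (single (m + n) (1 : F)) = single m 1 * single n 1 by simp]
  ring

lemma Lead.sq {m : ℤ} {a : F} {f : LaurentSeries F} (hf : Lead m a f) :
    Lead (2 * m) (a ^ 2) (f ^ 2) := by
  rw [two_mul, pow_two, pow_two]
  exact hf.mul hf

lemma lead_single (n : ℤ) (a : F) : Lead n a (single n a) :=
  ⟨PowerSeries.C a, by simp, by rw [ofPowerSeries_C, C_apply, single_mul_single]; simp⟩

lemma lead_zero (n : ℤ) : Lead n (0 : F) 0 := ⟨0, by simp, by simp⟩

lemma Lead.succ {n : ℤ} {f : LaurentSeries F} (hf : Lead n 0 f) : ∃ a, Lead (n + 1) a f := by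
  obtain ⟨p, hp, rfl⟩ := hf
  obtain ⟨q, rfl⟩ := PowerSeries.X_dvd_iff.2 hp
  refine ⟨_, q, rfl, ?_⟩
  rw [map_mul, ofPowerSeries_X, ← mul_assoc, single_mul_single, one_mul]

lemma Lead.of_lt {m n : ℤ} {a : F} {f : LaurentSeries F} (hf : Lead n a f) (h : m < n) :
    Lead m 0 f := by
  obtain ⟨p, rfl, rfl⟩ := hf
  obtain ⟨k, rfl⟩ : ∃ k : ℕ, n = m + ((k + 1 : ℕ) : ℤ) := ⟨(n - m - 1).toNat, by omega⟩
  refine ⟨PowerSeries.X ^ (k + 1) * p, by simp, ?_⟩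
  rw [map_mul, map_pow, ofPowerSeries_X, single_pow, ← mul_assoc, single_mul_single]
  simp

lemma Lead.of_le {m n : ℤ} {a : F} {f : LaurentSeries F} (hf : Lead n a f) (h : m ≤ n) :
    ∃ b, Lead m b f := by
  rcases h.eq_or_lt with rfl | h
  · exact ⟨a, hf⟩
  · exact ⟨0, hf.of_lt h⟩

lemma Lead.unique {n : ℤ} {a b : F} {f : LaurentSeries F} (hf : Lead n a f) (hg : Lead n b f) :
    a = b := by
  obtain ⟨p, rfl, h⟩ := hf
  obtain ⟨q, rfl, h'⟩ := hg
  rw [h] at h'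
  have h1 : (single n (1 : F)) ≠ 0 := by simp
  rw [ofPowerSeries_injective (mul_left_cancel₀ h1 h')]

lemma Lead.ne_zero {n : ℤ} {a : F} {f : LaurentSeries F} (hf : Lead n a f) (ha : a ≠ 0) :
    f ≠ 0 := by
  rintro rfl
  exact ha (hf.unique (lead_zero n))

lemma exists_lead {f : LaurentSeries F} (hf : f ≠ 0) : ∃ n a, a ≠ 0 ∧ Lead n a f := by
  refine ⟨f.order, PowerSeries.constantCoeff f.powerSeriesPart, ?_, f.powerSeriesPart, rfl,
    (LaurentSeries.single_order_mul_powerSeriesPart f).symm⟩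
  rw [← PowerSeries.coeff_zero_eq_constantCoeff_apply, LaurentSeries.powerSeriesPart_coeff]
  simpa using coeff_order_eq_zero.not.2 hf

/-- `f` is nonzero of odd order. -/
def OddOrd (f : LaurentSeries F) : Prop := ∃ n a, Odd n ∧ a ≠ 0 ∧ Lead n a f

/-- `f` is nonzero of even order. -/
def EvenOrd (f : LaurentSeries F) : Prop := ∃ n a, Even n ∧ a ≠ 0 ∧ Lead n a f

lemma OddOrd.ne_zero {f : LaurentSeries F} (h : OddOrd f) : f ≠ 0 := by
  obtain ⟨n, a, -, ha, h⟩ := h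
  exact h.ne_zero ha

lemma even_or_odd {f : LaurentSeries F} (hf : f ≠ 0) : EvenOrd f ∨ OddOrd f := by
  obtain ⟨n, a, ha, h⟩ := exists_lead hf
  rcases Int.even_or_odd n with hn | hn
  · exact Or.inl ⟨n, a, hn, ha, h⟩
  · exact Or.inr ⟨n, a, hn, ha, h⟩

lemma OddOrd.not_even {f : LaurentSeries F} (ho : OddOrd f) : ¬ EvenOrd f := by
  rintro ⟨n, a, hn, ha, h⟩
  obtain ⟨m, b, hm, hb, h'⟩ := ho
  rcases lt_trichotomy m n with hmn | rfl | hmn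
  · exact hb (h'.unique (h.of_lt hmn))
  · exact Int.not_even_iff_odd.2 hm hn
  · exact ha (h.unique (h'.of_lt hmn))

lemma OddOrd.mul {f g : LaurentSeries F} (hf : OddOrd f) (hg : OddOrd g) : EvenOrd (f * g) := by
  obtain ⟨n, a, hn, ha, h⟩ := hf
  obtain ⟨m, b, hm, hb, h'⟩ := hg
  exact ⟨_, _, hn.add_odd hm, mul_ne_zero ha hb, h.mul h'⟩

lemma OddOrd.mul_even {f g : LaurentSeries F} (hf : OddOrd f) (hg : EvenOrd g) :
    OddOrd (f * g) := by
  obtain ⟨n, a, hn, ha, h⟩ := hf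
  obtain ⟨m, b, hm, hb, h'⟩ := hg
  exact ⟨_, _, hn.add_even hm, mul_ne_zero ha hb, h.mul h'⟩

variable [CharP F 2]

instance charP_laurentSeries : CharP (LaurentSeries F) 2 :=
  charP_of_injective_ringHom (f := (HahnSeries.C : F →+* LaurentSeries F)) C_injective 2

/-! ### The map `℘` on series and on the residue field -/

/-- The coefficients of the solution of `z² + z = p` with zero constant term, where `p` has
coefficients `c n`: squaring sends the coefficient of `uⁱ` to `u²ⁱ`. -/
def wpRoot (c : ℕ → F) : ℕ → F
  | 0 => 0
  | n + 1 => c (n + 1) + if 2 ∣ n + 1 then wpRoot c ((n + 1) / 2) ^ 2 else 0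
decreasing_by omega

lemma coeff_sq (p : PowerSeries F) (n : ℕ) :
    PowerSeries.coeff n (p ^ 2) = if 2 ∣ n then PowerSeries.coeff (n / 2) p ^ 2 else 0 := by
  have h : PowerSeries.map (frobenius F 2) (PowerSeries.expand 2 two_ne_zero p) = p ^ 2 :=
    MvPowerSeries.map_frobenius_expand 2 two_ne_zero
  rw [← h, PowerSeries.coeff_map, PowerSeries.coeff_expand]
  split_ifs <;> simp [frobenius_def]

/-- `℘` maps onto the power series without constant term. -/
lemma Lead.isWp {a : F} {f : LaurentSeries F} (hf : Lead 1 a f) : IsWp f := by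
  obtain ⟨p, hp, rfl⟩ := hf.of_lt zero_lt_one
  refine ⟨ofPowerSeries ℤ F (PowerSeries.mk (wpRoot fun n => PowerSeries.coeff n p)), ?_⟩
  rw [← map_pow, ← map_add]
  have h1 : single (0 : ℤ) (1 : F) = 1 := rfl
  rw [h1, one_mul]
  congr 1
  ext n
  rw [map_add, coeff_sq]
  cases n with
  | zero => simp [wpRoot, hp]
  | succ n =>
    rw [PowerSeries.coeff_mk, PowerSeries.coeff_mk]
    conv_rhs => rw [wpRoot]
    rw [add_left_comm, CharTwo.add_self_eq_zero, add_zero]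

variable {r : F}

lemma lead_zero_isWp {e : F} {c : LaurentSeries F} (hc : Lead 0 e c) (he : IsWp e) : IsWp c := by
  obtain ⟨z, rfl⟩ := he
  have h0 : Lead 0 0 (c + ((single 0 z) ^ 2 + single 0 z)) := by
    have := hc.add ((lead_single 0 z).sq.add (lead_single 0 z))
    rwa [CharTwo.add_self_eq_zero] at this
  obtain ⟨a, ha⟩ := h0.succ
  have hz : IsWp ((single 0 z) ^ 2 + single 0 z : LaurentSeries F) := ⟨_, rfl⟩
  have := hz.add ha.isWp
  rwa [add_comm c, add_add_self] at this

/-- The residue form `α² + αβ + rβ²` is anisotropic, so nonzero norms for `r` have even order. -/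
lemma not_isNorm_unram_of_odd (hr : ¬ IsWp r) {b : LaurentSeries F} (hb : OddOrd b) :
    ¬ IsNorm (single 0 r) b := by
  rintro ⟨x, y, h⟩
  have hxy : ∃ n α β, Lead n α x ∧ Lead n β y ∧ (α ≠ 0 ∨ β ≠ 0) := by
    by_cases hx : x = 0
    · by_cases hy : y = 0
      · exact absurd (by simp [h, hx, hy]) hb.ne_zero
      · obtain ⟨n, β, hβ, hl⟩ := exists_lead hy
        exact ⟨n, 0, β, hx ▸ lead_zero n, hl, Or.inr hβ⟩
    · obtain ⟨m, α, hα, hl⟩ := exists_lead hx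
      by_cases hy : y = 0
      · exact ⟨m, α, 0, hl, hy ▸ lead_zero m, Or.inl hα⟩
      · obtain ⟨n, β, hβ, hl'⟩ := exists_lead hy
        rcases le_total m n with hmn | hmn
        · obtain ⟨β', h'⟩ := hl'.of_le hmn
          exact ⟨m, α, β', hl, h', Or.inl hα⟩
        · obtain ⟨α', h'⟩ := hl.of_le hmn
          exact ⟨n, α', β, h', hl', Or.inr hβ⟩
  obtain ⟨n, α, β, hx, hy, hαβ⟩ := hxy
  refine hb.not_even ⟨2 * n, α ^ 2 + α * β + r * β ^ 2, even_two_mul n, ?_, ?_⟩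
  · intro h0
    by_cases hβ : β = 0
    · simp_all
    · refine hr ⟨α / β, ?_⟩
      field_simp
      linear_combination h0 - (α ^ 2 + α * β) * two_eq_zero' (K := F)
  · have h1 := hx.mul hy
    have h2 := (lead_single 0 r).mul hy.sq
    rw [← two_mul] at h1
    rw [zero_add] at h2
    rw [h]
    exact (hx.sq.add h1).add h2

variable [Finite F]

lemma exists_sq (a : F) : ∃ s, a = s ^ 2 := by
  obtain ⟨s, hs⟩ := FiniteField.isSquare_of_char_two (ringChar.eq F 2) a
  exact ⟨s, by rw [hs, sq]⟩

variable (F) in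
/-- In a finite field of characteristic 2 the image of `℘` has index two, its kernel being
`{0, 1}`. -/
lemma exists_const : ∃ r : F, ¬ IsWp r ∧ ∀ e : F, IsWp e ∨ IsWp (e + r) := by
  let f : F →+ F :=
    { toFun := fun z => z ^ 2 + z
      map_zero' := by simp
      map_add' := fun z w => by
        linear_combination (z * w) * two_eq_zero' (K := F) }
  have hk : (f.ker : Set F) = {0, 1} := by
    ext z
    have : f z = z * (z + 1) := by change z ^ 2 + z = _; ring
    simp [AddMonoidHom.mem_ker, this, CharTwo.add_eq_zero]
  have hcard : Nat.card f.ker = 2 := by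
    change Nat.card (f.ker : Set F) = 2
    rw [hk, Nat.card_coe_set_eq, Set.ncard_pair zero_ne_one]
  have hi : f.range.index = 2 := by
    have h1 := f.range.card_mul_index
    have h2 := f.ker.card_mul_index
    rw [AddSubgroup.index_ker, hcard] at h2
    have h3 : 0 < Nat.card f.range := Nat.card_pos
    nlinarith
  have hmem : ∀ e, e ∈ f.range ↔ IsWp e := fun e =>
    ⟨fun ⟨z, hz⟩ => ⟨z, hz.symm⟩, fun ⟨z, hz⟩ => ⟨z, hz.symm⟩⟩
  obtain ⟨r, hr⟩ := AddSubgroup.index_eq_two_iff.1 hi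
  refine ⟨r, fun h => ?_, fun e => ?_⟩
  · have := hr 0
    simp only [zero_add, hmem] at this
    rcases this with ⟨_, h'⟩ | ⟨_, h'⟩
    · exact h' IsWp.zero
    · exact h' h
  · rcases hr e with ⟨h, _⟩ | ⟨h, _⟩
    · exact Or.inr ((hmem _).1 h)
    · exact Or.inl ((hmem _).1 h)

/-! ### Reduction modulo `℘(K)` and norm groups -/

/-- Reduction modulo `℘(K)`: a property of classes modulo `℘(K)` that holds for the classes of `0`
and of the constant `r` holds for all series, provided that at a pole of odd order it may be
deduced from the series with poles of lower order. -/
lemma artinSchreier_induction (hr : ∀ e : F, IsWp e ∨ IsWp (e + r)) {P : LaurentSeries F → Prop}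
    (h0 : ∀ c, IsWp c → P c) (h1 : ∀ c, IsWp (c + single 0 r) → P c)
    (hcongr : ∀ c d, IsWp (c + d) → P d → P c)
    (hodd : ∀ n a c, Odd n → n < 0 → a ≠ 0 → Lead n a c →
      (∀ d e, Lead (n + 1) e d → P d) → P c) (c : LaurentSeries F) : P c := by
  have key : ∀ (N : ℕ) (n : ℤ) (a : F) (c : LaurentSeries F), -(N : ℤ) ≤ n → Lead n a c → P c := by
    intro N
    induction N with
    | zero =>
      intro n a c hn hc
      obtain ⟨e, he⟩ := hc.of_le (m := 0) (by simpa using hn)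
      rcases hr e with h | h
      · exact h0 c (lead_zero_isWp he h)
      · exact h1 c (lead_zero_isWp (he.add (lead_single 0 r)) h)
    | succ N ih =>
      intro n a c hn hc
      by_cases hn' : -(N : ℤ) ≤ n
      · exact ih n a c hn' hc
      have hn1 : -(N : ℤ) ≤ n + 1 := by push_cast at hn; omega
      by_cases ha : a = 0
      · subst ha
        obtain ⟨b, hb⟩ := hc.succ
        exact ih _ b c hn1 hb
      rcases Int.even_or_odd' n with ⟨k, rfl | hk⟩
      · obtain ⟨s, rfl⟩ := exists_sq a
        -- adding `℘(s uᵏ)` cancels the leading term, since `k > 2k`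
        have h2 : Lead (2 * k) 0 (c + ((single k s) ^ 2 + single k s)) := by
          have := hc.add ((lead_single k s).sq.add ((lead_single k s).of_lt (m := 2 * k) (by omega)))
          rwa [add_zero, CharTwo.add_self_eq_zero] at this
        obtain ⟨b, hb⟩ := h2.succ
        refine hcongr c _ ?_ (ih _ b _ hn1 hb)
        rw [add_add_self]
        exact ⟨_, rfl⟩
      · exact hodd n a c ⟨k, hk⟩ (by omega) ha hc fun d e hd => ih _ e d hn1 hd
  by_cases hc : c = 0
  · exact h0 c (hc ▸ IsWp.zero)
  · obtain ⟨n, a, -, h⟩ := exists_lead hc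
    exact key (-n).toNat n a c (by omega) h

lemma artinSchreier_normal_form (hr : ∀ e : F, IsWp e ∨ IsWp (e + r)) (c : LaurentSeries F) :
    IsWp c ∨ IsWp (c + single 0 r) ∨
      ∃ c' n a, Odd n ∧ n < 0 ∧ a ≠ 0 ∧ Lead n a c' ∧ IsWp (c + c') := by
  refine artinSchreier_induction (P := fun c => IsWp c ∨ IsWp (c + single 0 r) ∨
      ∃ c' n a, Odd n ∧ n < 0 ∧ a ≠ 0 ∧ Lead n a c' ∧ IsWp (c + c')) hr (fun c h => Or.inl h) (fun c h => Or.inr (Or.inl h)) ?_ ?_ c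
  · intro c d hcd hd
    rcases hd with h | h | ⟨c', n, a, hn, hn0, ha, hl, h⟩
    · left
      have := hcd.add h
      rwa [add_assoc, CharTwo.add_self_eq_zero, add_zero] at this
    · right; left
      have := hcd.add h
      rwa [add_assoc, add_add_self] at this
    · right; right
      have := hcd.add h
      rw [add_assoc, add_add_self] at this
      exact ⟨c', n, a, hn, hn0, ha, hl, this⟩
  · intro n a c hn hn0 ha hl _
    refine Or.inr (Or.inr ⟨c, n, a, hn, hn0, ha, hl, ?_⟩)
    rw [CharTwo.add_self_eq_zero]
    exact IsWp.zero

/-- For `b` of odd order, `℘(K) + bK²` has index at most two in `K`, because a pole of `c` of odd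
order can be cancelled by an element of `bK²`. -/
lemma isNorm_or_of_odd (hr : ∀ e : F, IsWp e ∨ IsWp (e + r)) {b : LaurentSeries F} (hb : OddOrd b)
    (c : LaurentSeries F) : IsNorm c b ∨ IsNorm (c + single 0 r) b := by
  refine artinSchreier_induction hr (fun c h => Or.inl (h.isNorm b))
    (fun c h => Or.inr (h.isNorm b)) ?_ ?_ c
  · intro c d hcd hd
    refine hd.imp (fun h => h.congr (by rwa [add_comm])) (fun h => h.congr ?_)
    rwa [show d + single 0 r + (c + single 0 r) = c + d + (single 0 r + single 0 r) by ring,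
      CharTwo.add_self_eq_zero, add_zero]
  · intro n a c hn _ ha hl ih
    obtain ⟨m, β, hm, hβ, hbl⟩ := hb
    obtain ⟨k, hk⟩ := (hn.sub_odd hm).two_dvd
    obtain ⟨s, hs⟩ := exists_sq (a / β)
    have h0 : Lead n 0 (c + b * (single k s) ^ 2) := by
      have := hbl.mul (lead_single k s).sq
      rw [← hs, mul_div_cancel₀ _ hβ, show m + 2 * k = n by omega] at this
      have := hl.add this
      rwa [CharTwo.add_self_eq_zero] at this
    obtain ⟨e, he⟩ := h0.succ
    have hbs : IsNorm (b * (single k s) ^ 2) b :=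
      isNorm_iff.2 (Or.inr ⟨single k s, by rw [CharTwo.add_self_eq_zero]; exact IsWp.zero⟩)
    refine (ih _ e he).imp (fun h => ?_) (fun h => ?_)
    · have := hbs.add h
      rwa [add_comm c, add_add_self] at this
    · have := hbs.add h
      rwa [add_comm c, add_assoc, add_add_self] at this

lemma isNorm_unram_of_even {b : LaurentSeries F} (hb : EvenOrd b) : IsNorm (single 0 r) b := by
  obtain ⟨n, a, hn, ha, hl⟩ := hb
  obtain ⟨k, rfl⟩ := hn.two_dvd
  obtain ⟨s, rfl⟩ := exists_sq a
  have hs : s ≠ 0 := by rintro rfl; simp at ha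
  have hT : (single (-k) s⁻¹ : LaurentSeries F) ≠ 0 := by simpa using hs
  refine IsNorm.of_mul_sq hT ?_
  have h1 : Lead 0 1 (b * (single (-k) s⁻¹) ^ 2) := by
    have := hl.mul (lead_single (-k) s⁻¹).sq
    rwa [← mul_pow, mul_inv_cancel₀ hs, one_pow, show 2 * k + 2 * -k = 0 by ring] at this
  obtain ⟨t, ht⟩ := exists_sq r
  have h2 : Lead 0 0 (single 0 r + b * (single (-k) s⁻¹) ^ 2 * (single 0 t) ^ 2) := by
    have h3 := h1.mul (lead_single 0 t).sq
    rw [one_mul, ← ht, mul_zero, add_zero] at h3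
    have := (lead_single 0 r).add h3
    rwa [CharTwo.add_self_eq_zero] at this
  obtain ⟨e, he⟩ := h2.succ
  exact isNorm_iff.2 (Or.inr ⟨_, he.isWp⟩)

/-- Norm groups have index at most two in `Kˣ`. -/
lemma isNorm_mul_of_not {c b₁ b₂ : LaurentSeries F} (hb₁ : b₁ ≠ 0) (hb₂ : b₂ ≠ 0)
    (h₁ : ¬ IsNorm c b₁) (h₂ : ¬ IsNorm c b₂) : IsNorm c (b₁ * b₂) := by
  obtain ⟨r, hr0, hr⟩ := exists_const F
  rcases artinSchreier_normal_form hr c with h | h | ⟨c', n, a, hn, -, ha, hl, h⟩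
  · exact absurd (h.isNorm b₁) h₁
  · have hodd : ∀ b, b ≠ 0 → ¬ IsNorm c b → OddOrd b := fun b hb hnb =>
      (even_or_odd hb).resolve_left fun he =>
        hnb ((isNorm_unram_of_even he).congr (by rwa [add_comm]))
    exact (isNorm_unram_of_even ((hodd _ hb₁ h₁).mul (hodd _ hb₂ h₂))).congr (by rwa [add_comm])
  · have hc' : OddOrd c' := ⟨n, a, hn, ha, hl⟩
    have hcc' : IsNorm c c' := (IsNorm.self c').congr (by rwa [add_comm])
    have hg : ∀ b, b ≠ 0 → ∃ g, g ≠ 0 ∧ IsNorm c g ∧ OddOrd (g * b) := fun b hb => by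
      rcases even_or_odd hb with he | ho
      · exact ⟨c', hc'.ne_zero, hcc', hc'.mul_even he⟩
      · exact ⟨1, one_ne_zero, by simpa using IsNorm.sq c 1, by rwa [one_mul]⟩
    obtain ⟨g₁, hg₁, hn₁, ho₁⟩ := hg b₁ hb₁
    obtain ⟨g₂, hg₂, hn₂, ho₂⟩ := hg b₂ hb₂
    have k₁ := (isNorm_or_of_odd hr ho₁ c).resolve_left fun h => h₁ (hn₁.of_mul hg₁ h)
    have k₂ := (isNorm_or_of_odd hr ho₂ c).resolve_left fun h => h₂ (hn₂.of_mul hg₂ h)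
    have k := (k₁.mul k₂).add (isNorm_unram_of_even (r := r) (ho₁.mul ho₂))
    rw [add_assoc, CharTwo.add_self_eq_zero, add_zero] at k
    refine (hn₁.mul hn₂).of_mul (mul_ne_zero hg₁ hg₂) ?_
    rwa [show g₁ * g₂ * (b₁ * b₂) = g₁ * b₁ * (g₂ * b₂) by ring]

/-- Distinct classes modulo `℘(K)` have distinct norm groups. -/
lemma exists_norm_ne {c d : LaurentSeries F} (hcd : ¬ IsWp (c + d)) :
    ∃ g, g ≠ 0 ∧ ¬ (IsNorm c g ↔ IsNorm d g) := by
  by_contra! hne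
  obtain ⟨r, hr0, hr⟩ := exists_const F
  have hall : ∀ b : LaurentSeries F, OddOrd b → IsNorm (c + d) b := by
    intro b hb
    by_cases h : IsNorm c b
    · exact h.add ((hne b hb.ne_zero).1 h)
    · have h1 := (isNorm_or_of_odd hr hb c).resolve_left h
      have h2 := (isNorm_or_of_odd hr hb d).resolve_left
        fun h' => h ((hne b hb.ne_zero).2 h')
      have h3 := h1.add h2
      rwa [show c + single 0 r + (d + single 0 r) = c + d + (single 0 r + single 0 r) by ring,
        CharTwo.add_self_eq_zero, add_zero] at h3
  rcases artinSchreier_normal_form hr (c + d) with h | h | ⟨e, n, a, hn, hn0, ha, hl, h⟩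
  · exact hcd h
  · have hu : OddOrd (single 1 1 : LaurentSeries F) :=
      ⟨1, 1, odd_one, one_ne_zero, lead_single 1 1⟩
    exact not_isNorm_unram_of_odd hr0 hu ((hall _ hu).congr h)
  · -- `e + r` is a norm for `e + r`; were it a norm for `e`, it would be one for `r`
    have hu : OddOrd (e + single 0 r) := by
      refine ⟨n, a, hn, ha, ?_⟩
      have := hl.add ((lead_single 0 r).of_lt hn0)
      rwa [add_zero] at this
    have h1 := ((hall _ hu).congr h).add (IsNorm.self (e + single 0 r))
    rw [add_add_self] at h1
    exact not_isNorm_unram_of_odd hr0 hu h1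

/-- Two distinct norm groups of index two generate `Kˣ`. -/
lemma exists_mul_of_ne {c d : LaurentSeries F} (hcd : ¬ IsWp (c + d)) {b : LaurentSeries F}
    (hb : b ≠ 0) : ∃ p q, IsNorm c p ∧ IsNorm d q ∧ b = p * q := by
  have key : ∀ c d g : LaurentSeries F, g ≠ 0 → IsNorm c g → ¬ IsNorm d g →
      ∃ p q, IsNorm c p ∧ IsNorm d q ∧ b = p * q := by
    intro c d g hg hc hd
    by_cases hdb : IsNorm d b
    · exact ⟨1, b, by simpa using IsNorm.sq c 1, hdb, (one_mul b).symm⟩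
    · refine ⟨g⁻¹, g * b, hc.inv, isNorm_mul_of_not hg hb hd hdb, ?_⟩
      field_simp
  obtain ⟨g, hg, h⟩ := exists_norm_ne hcd
  by_cases hc : IsNorm c g
  · exact key c d g hg hc fun hd => h ⟨fun _ => hd, fun _ => hc⟩
  · have hd : IsNorm d g := by tauto
    obtain ⟨p, q, hp, hq, hpq⟩ := key d c g hg hd hc
    exact ⟨q, p, hq, hp, by rw [hpq, mul_comm]⟩

end Series

/-! ### Isotropy of the quaternary form -/

section Form

variable {K : Type*} [Field K] [CharP K 2]

lemma exists_root_iff (c : K) : (∃ x : K, x ^ 2 + x + c = 0) ↔ IsWp c :=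
  exists_congr fun x => by rw [CharTwo.add_eq_zero, eq_comm]

/-- The form `a₁ N_{a₂} ⊥ a₃ N_{a₄}` has a nontrivial zero. -/
def Isotropic (a₁ a₂ a₃ a₄ : K) : Prop :=
  ∃ x : Fin 4 → K, x ≠ 0 ∧
    a₁ * (x 0) ^ 2 + a₁ * (x 0 * x 1) + a₁ * a₂ * (x 1) ^ 2 +
      a₃ * (x 2) ^ 2 + a₃ * (x 2 * x 3) + a₃ * a₄ * (x 3) ^ 2 = 0

lemma isotropic_of_isWp {a₁ a₂ a₃ a₄ : K} (h : IsWp a₂) : Isotropic a₁ a₂ a₃ a₄ := by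
  obtain ⟨z, rfl⟩ := h
  refine ⟨![z, 1, 0, 0], fun h => one_ne_zero (congrFun h 1), ?_⟩
  simp
  linear_combination (a₁ * (z ^ 2 + z)) * two_eq_zero' (K := K)

lemma isotropic_of_mul {a₁ a₂ a₃ a₄ p q : K} (h₁ : a₁ ≠ 0) (h₃ : a₃ ≠ 0) (hp : IsNorm a₂ p)
    (hq : IsNorm a₄ q) (h : a₁ * a₃ = p * q) : Isotropic a₁ a₂ a₃ a₄ := by
  have h0 : p * q ≠ 0 := h ▸ mul_ne_zero h₁ h₃
  have hp0 : p ≠ 0 := left_ne_zero_of_mul h0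
  -- `a₁ p = a₃ (p² q / a₃²)`
  obtain ⟨z, w, hzw⟩ := hq.mul (IsNorm.sq a₄ (p * a₃⁻¹))
  obtain ⟨x, y, hxy⟩ := hp
  refine ⟨![x, y, z, w], fun h => hp0 ?_, ?_⟩
  · have hx : x = 0 := congrFun h 0
    have hy : y = 0 := congrFun h 1
    simp [hxy, hx, hy]
  · have e : a₁ * p = a₃ * (q * (p * a₃⁻¹) ^ 2) := by
      field_simp
      linear_combination h
    rw [hzw] at e
    nth_rewrite 1 [hxy] at e
    simp
    linear_combination e + a₃ * (z ^ 2 + z * w + a₄ * w ^ 2) * two_eq_zero' (K := K)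

/-- If `a₂ ∉ ℘(K)` and `a₂ ≡ a₄` modulo `℘(K)`, a nontrivial zero gives
`a₁ p = a₃ q` with `p` and `q` nonzero norms for `a₂`. -/
lemma isNorm_mul_of_isotropic {a₁ a₂ a₃ a₄ : K} (h₁ : a₁ ≠ 0) (h₃ : a₃ ≠ 0) (h2 : ¬ IsWp a₂)
    (h4 : IsWp (a₂ + a₄)) (h : Isotropic a₁ a₂ a₃ a₄) : IsNorm a₂ (a₁ * a₃) := by
  have aniso : ∀ c x y : K, ¬ IsWp c → x ^ 2 + x * y + c * y ^ 2 = 0 → x = 0 ∧ y = 0 := by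
    intro c x y hc h
    by_cases hy : y = 0
    · simpa [hy] using h
    · refine absurd ⟨x / y, ?_⟩ hc
      field_simp
      linear_combination h - (x ^ 2 + x * y) * two_eq_zero' (K := K)
  have h4' : ¬ IsWp a₄ := fun h => h2 (by
    have := h.add h4
    rwa [add_comm a₂, add_add_self] at this)
  obtain ⟨x, hx0, hx⟩ := h
  set p := x 0 ^ 2 + x 0 * x 1 + a₂ * x 1 ^ 2 with hp
  set q := x 2 ^ 2 + x 2 * x 3 + a₄ * x 3 ^ 2 with hq
  have e : a₁ * p = a₃ * q := by
    rw [hp, hq]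
    linear_combination hx - (a₃ * q) * two_eq_zero' (K := K)
  have hp0 : p ≠ 0 := by
    intro hp0
    have hq0 : q = 0 := by
      rw [hp0, mul_zero] at e
      exact (mul_eq_zero.1 e.symm).resolve_left h₃
    obtain ⟨e0, e1⟩ := aniso _ _ _ h2 hp0
    obtain ⟨e2, e3⟩ := aniso _ _ _ h4' hq0
    apply hx0
    funext i
    fin_cases i <;> simp [e0, e1, e2, e3]
  have hq0 : q ≠ 0 := by
    rintro hq0
    rw [hq0, mul_zero] at e
    exact (mul_ne_zero h₁ hp0) e
  have hpn : IsNorm a₂ p := ⟨_, _, hp⟩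
  have hqn : IsNorm a₂ q := IsNorm.congr (c := a₄) (by rwa [add_comm]) ⟨_, _, hq⟩
  refine (hpn.mul hqn).of_mul (mul_ne_zero hp0 hq0) ?_
  rw [show p * q * (a₁ * a₃) = (a₃ * q) ^ 2 by linear_combination (a₃ * q) * e]
  exact IsNorm.sq _ _

end Form

end QuatForm

open QuatForm in

/-- **Anisotropy criterion for quaternary quadratic forms over a local field of characteristic 2.**
Let `K = Fq((u))` be the field of formal Laurent series over a finite field `Fq` of
characteristic 2, and let `a₁, a₂, a₃, a₄ ∈ K` with `a₁ ≠ 0`, `a₃ ≠ 0`. The quadratic form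
`a₁x₁² + a₁x₁x₂ + a₁a₂x₂² + a₃x₃² + a₃x₃x₄ + a₃a₄x₄²` has no nontrivial zero in `K⁴` iff
`X² + X + a₂` has no root in `K`, `X² + X + (a₂ + a₄)` has a root in `K`, and exactly one of
`a₁, a₃` is of the form `x² + xy + a₂y²` with `x, y ∈ K`. -/
theorem quaternary_form_anisotropic_iff_local_char_two
    (Fq : Type*) [Field Fq] [Fintype Fq] [CharP Fq 2]
    (a₁ a₂ a₃ a₄ : LaurentSeries Fq) (h₁ : a₁ ≠ 0) (h₃ : a₃ ≠ 0) :
    (¬ ∃ x : Fin 4 → LaurentSeries Fq, x ≠ 0 ∧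
        a₁ * (x 0) ^ 2 + a₁ * (x 0 * x 1) + a₁ * a₂ * (x 1) ^ 2 +
          a₃ * (x 2) ^ 2 + a₃ * (x 2 * x 3) + a₃ * a₄ * (x 3) ^ 2 = 0) ↔
      ((¬ ∃ x : LaurentSeries Fq, x ^ 2 + x + a₂ = 0) ∧
        (∃ x : LaurentSeries Fq, x ^ 2 + x + (a₂ + a₄) = 0) ∧
        Xor' (∃ x y : LaurentSeries Fq, a₁ = x ^ 2 + x * y + a₂ * y ^ 2)
          (∃ x y : LaurentSeries Fq, a₃ = x ^ 2 + x * y + a₂ * y ^ 2)) := by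
  rw [exists_root_iff, exists_root_iff]
  change ¬ Isotropic a₁ a₂ a₃ a₄ ↔
    ¬ IsWp a₂ ∧ IsWp (a₂ + a₄) ∧ Xor' (IsNorm a₂ a₁) (IsNorm a₂ a₃)
  constructor
  · intro h
    have h4 : IsWp (a₂ + a₄) := by
      by_contra hn
      obtain ⟨p, q, hp, hq, hpq⟩ := exists_mul_of_ne hn (mul_ne_zero h₁ h₃)
      exact h (isotropic_of_mul h₁ h₃ hp hq hpq)
    -- a norm `a₁ a₃` for `a₂` gives the isotropic factorization `a₁ a₃ = (a₁ a₃) · 1`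
    have hmul : ¬ IsNorm a₂ (a₁ * a₃) := fun hn =>
      h (isotropic_of_mul h₁ h₃ hn (by simpa using IsNorm.sq a₄ 1) (mul_one _).symm)
    refine ⟨fun h2 => h (isotropic_of_isWp h2), h4, ?_⟩
    by_cases k₁ : IsNorm a₂ a₁
    · exact Or.inl ⟨k₁, fun k₃ => hmul (k₁.mul k₃)⟩
    · exact Or.inr ⟨by_contra fun k₃ => hmul (isNorm_mul_of_not h₁ h₃ k₁ k₃), k₁⟩
  · rintro ⟨h2, h4, hx⟩ h
    have hn := isNorm_mul_of_isotropic h₁ h₃ h2 h4 h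
    rcases hx with ⟨k₁, k₃⟩ | ⟨k₃, k₁⟩
    · exact k₃ (k₁.of_mul h₁ hn)
    · exact k₁ (k₃.of_mul h₃ (by rwa [mul_comm]))
end

section
/- Let q = 2^k and K = F_q(t). For every a in K there exists g in K such that a' := a + g + g^2 is minimal, i.e., for every monic irreducible polynomial f in F_q[t], if v_f(a') < 0 then v_f(a') is odd, and if v_infty(a') < 0 (equivalently deg(a') > 0) then v_infty(a') is odd. Consequently the binary quadratic form x^2 + x y + a y^2 over K is equivalent, via the substitution x -> x + g y, to the minimal form x^2 + x y + a' y^2. -/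
/-!
Call `a` and `a + g + g²` Artin–Schreier equivalent; since the characteristic is `2`, the map
`g ↦ g + g²` is additive and this is an equivalence relation. The proof is a descent inside an
equivalence class, on the pair (degree of the denominator, degree of the numerator) ordered
lexicographically. It works because squaring is surjective on a finite field of characteristic `2`,
so that the leading part of a pole of even order is a square.

* If `f` divides the denominator of `a = N / (f ^ (2m) E)` to the exact even power `2m > 0`, the
  residue field `Fq[X] / (f)` is finite, so some polynomial `h` satisfies `h² E ≡ N` modulo `f`.
  Then `g = h / f ^ m` lowers the pole order at `f` without creating a new finite pole
  (`exists_denom_degree_lt`).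
* If the pole at infinity has even order `2m > 0`, a monomial `g = c X ^ m`, with `c²` the leading
  coefficient of the numerator, lowers the degree of the numerator, and the denominator of
  `a + g + g²` divides that of `a` (`exists_num_degree_lt`).
-/

/-- An element `a` of `Fq(t)` is minimal if every pole of `a` (including the one at infinity)
has odd multiplicity: for each monic irreducible `f`, the exact multiplicity of `f` in the
denominator of `a` (in lowest terms) is zero or odd, and if `a` has positive degree
(i.e. `v_∞(a) = -intDegree a < 0`) then its degree `intDegree a` is odd. -/
def RatFuncMinimal {Fq : Type*} [Field Fq] (a : RatFunc Fq) : Prop :=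
  (∀ f : Polynomial Fq, f.Monic → Irreducible f → ∀ n : ℕ,
      f ^ n ∣ a.denom → ¬ f ^ (n + 1) ∣ a.denom → (n = 0 ∨ Odd n)) ∧
  (0 < a.intDegree → Odd a.intDegree)

open Polynomial in
/-- Every residue class modulo an irreducible `f` is a square, since the residue field is finite
of characteristic `2`; the unit `E` modulo `f` is divided out. -/
lemma exists_sq_mul_congr {Fq : Type*} [Field Fq] [Fintype Fq] [CharP Fq 2]
    {f : Fq[X]} (hf : Irreducible f) (N E : Fq[X]) (hE : ¬ f ∣ E) :
    ∃ h : Fq[X], f ∣ N + h ^ 2 * E := by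
  have : Fact (Irreducible f) := ⟨hf⟩
  have : Module.Finite Fq (AdjoinRoot f) := (AdjoinRoot.powerBasis hf.ne_zero).finite
  have : Finite (AdjoinRoot f) := Module.finite_of_finite Fq
  have : CharP (AdjoinRoot f) 2 :=
    charP_of_injective_algebraMap (algebraMap Fq (AdjoinRoot f)).injective 2
  have hE' : AdjoinRoot.mk f E ≠ 0 := fun h => hE (AdjoinRoot.mk_eq_zero.1 h)
  obtain ⟨r, hr⟩ := FiniteField.isSquare_of_char_two (ringChar.eq (AdjoinRoot f) 2)
    (AdjoinRoot.mk f N / AdjoinRoot.mk f E)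
  obtain ⟨h, rfl⟩ := AdjoinRoot.mk_surjective r
  refine ⟨h, AdjoinRoot.mk_eq_zero.1 ?_⟩
  rw [map_add, map_mul, map_pow, pow_two, ← hr, div_mul_cancel₀ _ hE']
  exact CharTwo.add_self_eq_zero _

open Polynomial in
/-- A pole of even order `2 * m` at a finite place `f` can be reduced. -/
lemma exists_denom_degree_lt {Fq : Type*} [Field Fq] [Fintype Fq] [CharP Fq 2]
    (a : RatFunc Fq) {f : Fq[X]} (hf : Irreducible f) {m : ℕ} (hm : 0 < m)
    (h1 : f ^ (2 * m) ∣ a.denom) (h2 : ¬ f ^ (2 * m + 1) ∣ a.denom) :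
    ∃ g : RatFunc Fq, (a + g + g ^ 2).denom.natDegree < a.denom.natDegree := by
  obtain ⟨E, hE⟩ := h1
  have hfE : ¬ f ∣ E := by
    rintro ⟨E', rfl⟩
    exact h2 ⟨E', by rw [hE]; ring⟩
  have hE0 : E ≠ 0 := fun h => hfE (h ▸ dvd_zero f)
  obtain ⟨h, hh⟩ := exists_sq_mul_congr hf a.num E hfE
  obtain ⟨M, hM⟩ : f ∣ a.num + h ^ 2 * E + h * f ^ m * E :=
    dvd_add hh (((dvd_pow_self f hm.ne').mul_left h).mul_right E)
  obtain ⟨k, rfl⟩ : ∃ k, m = k + 1 := ⟨m - 1, by omega⟩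
  have hD0 : f ^ (2 * k + 1) * E ≠ 0 := mul_ne_zero (pow_ne_zero _ hf.ne_zero) hE0
  let φ := algebraMap Fq[X] (RatFunc Fq)
  have hφf : φ f ≠ 0 := RatFunc.algebraMap_ne_zero hf.ne_zero
  have hφE : φ E ≠ 0 := RatFunc.algebraMap_ne_zero hE0
  have hMφ : φ a.num + φ h ^ 2 * φ E + φ h * φ f ^ (k + 1) * φ E = φ f * φ M := by
    simpa using congrArg φ hM
  have ha : a = φ a.num / (φ f ^ (2 * (k + 1)) * φ E) := by
    conv_lhs => rw [← RatFunc.num_div_denom a, hE]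
    simp [φ]
  have key : a + φ h / φ f ^ (k + 1) + (φ h / φ f ^ (k + 1)) ^ 2
      = φ M / φ (f ^ (2 * k + 1) * E) := by
    rw [map_mul, map_pow]
    calc a + φ h / φ f ^ (k + 1) + (φ h / φ f ^ (k + 1)) ^ 2
        = (φ a.num + φ h ^ 2 * φ E + φ h * φ f ^ (k + 1) * φ E)
            / (φ f ^ (2 * (k + 1)) * φ E) := by
          conv_lhs => rw [ha]
          field_simp
          ring
      _ = φ M / (φ f ^ (2 * k + 1) * φ E) := by
          rw [hMφ]
          field_simp
          ring
  refine ⟨φ h / φ f ^ (k + 1), ?_⟩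
  rw [key]
  refine (natDegree_le_of_dvd (RatFunc.denom_div_dvd M _) hD0).trans_lt ?_
  have hpos := hf.natDegree_pos
  rw [hE, natDegree_mul (pow_ne_zero _ hf.ne_zero) hE0,
    natDegree_mul (pow_ne_zero _ hf.ne_zero) hE0, natDegree_pow, natDegree_pow]
  nlinarith

open Polynomial in
/-- A pole of even order `2 * m` at infinity can be reduced without raising the
degree of the denominator. -/
lemma exists_num_degree_lt {Fq : Type*} [Field Fq] [Fintype Fq] [CharP Fq 2]
    (a : RatFunc Fq) {m : ℕ} (hm : 0 < m) (h : a.num.natDegree = 2 * m + a.denom.natDegree) :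
    ∃ g : RatFunc Fq, (a + g + g ^ 2).denom.natDegree ≤ a.denom.natDegree ∧
      (a + g + g ^ 2).num.natDegree < a.num.natDegree := by
  obtain ⟨c, hc⟩ := FiniteField.isSquare_of_char_two (ringChar.eq Fq 2) a.num.leadingCoeff
  have hD0 : a.denom ≠ 0 := a.denom_ne_zero
  set p : Fq[X] := C c * X ^ m with hp
  set N : Fq[X] := a.num + p ^ 2 * a.denom + p * a.denom with hN
  have hpdeg : p.natDegree ≤ m := natDegree_C_mul_X_pow_le c m
  have hNdeg : N.natDegree < a.num.natDegree := by
    have hle : N.natDegree ≤ a.num.natDegree := by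
      refine natDegree_add_le_of_degree_le (natDegree_add_le_of_degree_le le_rfl ?_) ?_
      · refine natDegree_mul_le.trans ?_
        have := natDegree_pow_le_of_le 2 hpdeg
        omega
      · refine natDegree_mul_le.trans ?_
        omega
    refine lt_of_le_of_ne hle fun heq => ?_
    have hcoeff : N.coeff a.num.natDegree = 0 := by
      have e1 : (p * a.denom).coeff a.num.natDegree = 0 := by
        apply coeff_eq_zero_of_natDegree_lt
        refine natDegree_mul_le.trans_lt ?_
        omega
      have e2 : (p ^ 2 * a.denom).coeff a.num.natDegree = c * c := by
        have : p ^ 2 * a.denom = C (c * c) * (a.denom * X ^ (2 * m)) := by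
          rw [hp, C_mul]; ring
        rw [this, coeff_C_mul, h, add_comm (2 * m), coeff_mul_X_pow,
          (RatFunc.monic_denom a).coeff_natDegree, mul_one]
      rw [hN, coeff_add, coeff_add, e1, e2, add_zero, coeff_natDegree, hc]
      exact CharTwo.add_self_eq_zero _
    rw [← heq, coeff_natDegree, leadingCoeff_eq_zero] at hcoeff
    rw [hcoeff, natDegree_zero] at heq
    omega
  let φ := algebraMap Fq[X] (RatFunc Fq)
  have hφD : φ a.denom ≠ 0 := RatFunc.algebraMap_ne_zero hD0
  have key : a + φ p + φ p ^ 2 = φ N / φ a.denom := by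
    rw [eq_div_iff hφD, hN]
    have ha : a * φ a.denom = φ a.num := by
      rw [← eq_div_iff hφD]
      exact (RatFunc.num_div_denom a).symm
    simp only [map_add, map_mul, map_pow, ← ha]
    ring
  refine ⟨φ p, ?_⟩
  rw [key]
  refine ⟨natDegree_le_of_dvd (RatFunc.denom_div_dvd N _) hD0, ?_⟩
  by_cases hN0 : N = 0
  · rw [hN0, map_zero, zero_div, RatFunc.num_zero, natDegree_zero]
    omega
  · exact (natDegree_le_of_dvd (RatFunc.num_div_dvd N hD0) hN0).trans_lt hNdeg

/-- One step of the descent: an element which is not minimal is Artin–Schreier equivalent to one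
with lexicographically smaller (denominator degree, numerator degree). -/
lemma exists_lex_lt_of_not_minimal {Fq : Type*} [Field Fq] [Fintype Fq] [CharP Fq 2]
    (a : RatFunc Fq) (ha : ¬ RatFuncMinimal a) :
    ∃ g : RatFunc Fq, Prod.Lex (· < ·) (· < ·)
      ((a + g + g ^ 2).denom.natDegree, (a + g + g ^ 2).num.natDegree)
      (a.denom.natDegree, a.num.natDegree) := by
  rw [RatFuncMinimal, not_and_or] at ha
  rcases ha with ha | ha
  · push Not at ha
    obtain ⟨f, -, hf, n, h1, h2, hn0, hn⟩ := ha
    obtain ⟨m, rfl⟩ := even_iff_two_dvd.1 (Nat.not_odd_iff_even.1 hn)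
    obtain ⟨g, hg⟩ := exists_denom_degree_lt a hf (by omega) h1 h2
    exact ⟨g, Prod.Lex.left _ _ hg⟩
  · push Not at ha
    obtain ⟨hpos, hodd⟩ := ha
    obtain ⟨z, hz⟩ := even_iff_two_dvd.1 (Int.not_odd_iff_even.1 hodd)
    rw [RatFunc.intDegree] at hpos hz
    obtain ⟨g, hg1, hg2⟩ := exists_num_degree_lt a (m := z.toNat) (by omega) (by omega)
    refine ⟨g, ?_⟩
    rcases hg1.lt_or_eq with hlt | heq
    · exact Prod.Lex.left _ _ hlt
    · rw [heq]
      exact Prod.Lex.right _ hg2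

lemma exists_minimal_add {Fq : Type*} [Field Fq] [Fintype Fq] [CharP Fq 2] (a : RatFunc Fq) :
    ∃ g : RatFunc Fq, RatFuncMinimal (a + g + g ^ 2) := by
  have wf : WellFounded fun b a : RatFunc Fq => Prod.Lex (· < ·) (· < ·)
      (b.denom.natDegree, b.num.natDegree) (a.denom.natDegree, a.num.natDegree) :=
    InvImage.wf (fun a : RatFunc Fq => (a.denom.natDegree, a.num.natDegree))
      (WellFounded.prod_lex Nat.lt_wfRel.wf Nat.lt_wfRel.wf)
  induction a using wf.induction with
  | _ a ih =>
    by_cases ha : RatFuncMinimal a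
    · exact ⟨0, by simpa using ha⟩
    · obtain ⟨g, hg⟩ := exists_lex_lt_of_not_minimal a ha
      obtain ⟨g', hg'⟩ := ih _ hg
      have : CharP (RatFunc Fq) 2 :=
        charP_of_injective_algebraMap (algebraMap Fq (RatFunc Fq)).injective 2
      refine ⟨g + g', ?_⟩
      have e : a + (g + g') + (g + g') ^ 2 = a + g + g ^ 2 + g' + g' ^ 2 := by
        rw [CharTwo.add_sq]; ring
      rwa [e]

/-- **Minimization of binary Artin–Schreier norm forms over `Fq(t)`, `q = 2^k`.**
For every `a ∈ K = Fq(t)` there is `g ∈ K` such that `a' = a + g + g²` is minimal (all poles of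
`a'`, including at infinity, have odd multiplicity); consequently the binary quadratic form
`x² + xy + ay²` is equivalent, via the substitution `x ↦ x + gy`, to the minimal form
`x² + xy + a'y²`. -/
theorem exists_minimal_artin_schreier_form
    (Fq : Type*) [Field Fq] [Fintype Fq] [CharP Fq 2] (a : RatFunc Fq) :
    ∃ g : RatFunc Fq, RatFuncMinimal (a + g + g ^ 2) ∧
      ∀ x y : RatFunc Fq,
        (x + g * y) ^ 2 + (x + g * y) * y + a * y ^ 2 =
          x ^ 2 + x * y + (a + g + g ^ 2) * y ^ 2 := by
  obtain ⟨g, hg⟩ := exists_minimal_add a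
  have : CharP (RatFunc Fq) 2 :=
    charP_of_injective_algebraMap (algebraMap Fq (RatFunc Fq)).injective 2
  refine ⟨g, hg, fun x y => ?_⟩
  rw [CharTwo.add_sq]
  ring
end

section
/- Let q = 2^k, K = F_q(t), let a_1, a_3 in F_q[t] be squarefree polynomials with gcd(a_1, a_3) = 1, and let a_2, a_4 in K. Let f in F_q[t] be a monic irreducible polynomial such that v_f(a_1 a_3) is odd and such that neither a_2 nor a_4 has a pole at f. Then the equation a_1 x_1^2 + a_1 x_1 x_2 + a_1 a_2 x_2^2 + a_3 x_3^2 + a_3 x_3 x_4 + a_3 a_4 x_4^2 = 0 has a nontrivial solution in the f-adic completion K_(f) if and only if [a_2,f) = 0 or [a_4,f) = 0. -/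
/-! Exactly one of the squarefree coprime polynomials `a₁`, `a₃` is divisible by `f`, and only once;
so one of them has valuation `exp (-1)` and the other valuation `1`.

If `[a₂,f) = 0`, a root of `X² + X + a₂` modulo `f` lifts to a root `y` in the completion
(`exists_root_of_approx_root`), and `(y, 1, 0, 0)` is a nontrivial zero of the form; the case
`[a₄,f) = 0` is the same.

If `[a₂,f) ≠ 0` and `[a₄,f) ≠ 0`, then each norm form `X² + XY + aY²` is anisotropic modulo `f`, so
all its nonzero values have even valuation (`exists_valuation_normForm_eq_sq`). At a nontrivial
zero of the quaternary form the two binary parts would have equal valuations, one of them even and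
the other odd.
-/

open IsDedekindDomain

section LocalField

open Filter Topology WithZero

/-- Hensel's lemma for `X² + X + a` in characteristic two. If `d = w² + w + a` has valuation less
than one, the root is `w + ∑ d ^ 2 ^ n`, since `T = ∑ d ^ 2 ^ n` satisfies `T = T² + d`. -/
lemma exists_root_of_approx_root {L : Type*} [Field L] [CharP L 2] [Valued L ℤᵐ⁰]
    [CompleteSpace L] [T0Space L] (a w : L) (hw : Valued.v (w ^ 2 + w + a) < 1) :
    ∃ y : L, y ^ 2 + y + a = 0 := by
  set d := w ^ 2 + w + a with hd
  let s : ℕ → L := fun n => ∑ i ∈ Finset.range n, d ^ 2 ^ i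
  have hs : ∀ n, s (n + 1) = s n ^ 2 + d := by
    intro n
    simp only [s]
    rw [Finset.sum_range_succ', sum_pow_char (p := 2)]
    simp [pow_succ, pow_mul]
  have h0 : Tendsto (fun n => s (n + 1) - s n) atTop (𝓝 0) := by
    have : (fun n => s (n + 1) - s n) = (fun n : ℕ => d ^ n) ∘ (fun n : ℕ => 2 ^ n) := by
      funext n
      simp [s, Finset.sum_range_succ]
    rw [this]
    exact (Valued.tendsto_zero_pow_of_v_lt_one hw).comp
      (tendsto_pow_atTop_atTop_of_one_lt one_lt_two)
  have hna : NonarchimedeanRing L := by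
    rw [Valued.toUniformSpace_eq L ℤᵐ⁰]
    exact (Valuation.subgroups_basis _).nonarchimedean
  have hc : CauchySeq s := NonarchimedeanAddGroup.cauchySeq_of_tendsto_sub_nhds_zero h0
  obtain ⟨T, hT⟩ := cauchySeq_tendsto_of_complete hc
  have hT' : T = T ^ 2 + d := by
    refine tendsto_nhds_unique (hT.comp (tendsto_add_atTop_nat 1)) ?_
    have : s ∘ (fun n => n + 1) = fun n => s n ^ 2 + d := funext hs
    rw [this]
    exact (hT.pow 2).add_const d
  refine ⟨w + T, ?_⟩
  have h2 : (2 : L) = 0 := CharTwo.two_eq_zero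
  linear_combination hT' + (w * T + T ^ 2 + d) * h2 - hd

/-- If `X² + X + a` has no root modulo the maximal ideal, then `X² + XY + aY²` takes only values
whose valuation is a square in `Γ`, and is anisotropic: the square root `s` is the larger of `v x`
and `v y`. -/
lemma exists_valuation_normForm_eq_sq {L Γ : Type*} [Field L] [LinearOrderedCommGroupWithZero Γ]
    (v : Valuation L Γ) (a : L) (ha : v a ≤ 1)
    (h : ∀ z, v z ≤ 1 → v (z ^ 2 + z + a) = 1) (x y : L) :
    ∃ s : Γ, v (x ^ 2 + x * y + a * y ^ 2) = s ^ 2 ∧ (s = 0 → x = 0 ∧ y = 0) := by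
  by_cases hy : y = 0
  · exact ⟨v x, by simp [hy], fun hx => ⟨by simpa using hx, hy⟩⟩
  have hN : x ^ 2 + x * y + a * y ^ 2 = y ^ 2 * ((x / y) ^ 2 + x / y + a) := by
    field_simp
  rcases le_or_gt (v (x / y)) 1 with hz | hz
  · refine ⟨v y, ?_, fun h0 => absurd ((map_eq_zero v).1 h0) hy⟩
    rw [hN, map_mul, h _ hz, mul_one, map_pow]
  · have hlt : v (x / y) < v (x / y) ^ 2 := by
      simpa [sq] using mul_lt_mul_of_pos_right hz (zero_lt_one.trans hz)
    have h1 : v ((x / y) ^ 2 + x / y + a) = v (x / y) ^ 2 := by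
      rw [add_assoc, ← map_pow]
      refine Valuation.map_add_eq_of_lt_left v ?_
      rw [map_pow]
      exact (v.map_add_le le_rfl (ha.trans hz.le)).trans_lt hlt
    refine ⟨v x, ?_, fun h0 => ?_⟩
    · rw [hN, map_mul, h1, ← map_pow, ← map_mul, ← mul_pow, mul_div_cancel₀ _ hy, map_pow]
    · rw [map_div₀, h0, zero_div] at hz
      exact absurd hz (not_lt.2 zero_le_one)

/-- In `ℤᵐ⁰`, no nonzero square is `exp (-1)` times a square. -/
lemma eq_zero_of_exp_neg_one_mul_sq {s t : ℤᵐ⁰} (h : exp (-1) * s ^ 2 = t ^ 2) :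
    s = 0 ∧ t = 0 := by
  by_cases hs : s = 0
  · subst hs
    simp at h
    exact ⟨rfl, by simpa using h.symm⟩
  by_cases ht : t = 0
  · subst ht
    simp [hs] at h
  have := congrArg log h
  rw [log_mul (by simp) (by simpa using hs), log_pow, log_pow, log_exp] at this
  simp only [nsmul_eq_mul] at this
  push_cast at this
  omega

section Place

variable {Fq : Type*} [Field Fq] {f : Polynomial Fq} {P : HeightOneSpectrum (Polynomial Fq)}

local notation "KP" => HeightOneSpectrum.adicCompletion (RatFunc Fq) P

lemma valued_algebraMap_lt_one_iff (hP : P.asIdeal = Ideal.span {f}) (p : Polynomial Fq) :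
    Valued.v (algebraMap (Polynomial Fq) KP p) < 1 ↔ f ∣ p := by
  have := HeightOneSpectrum.valuedAdicCompletion_eq_valuation (K := RatFunc Fq) P p
  rw [← Ideal.mem_span_singleton, ← hP,
    ← HeightOneSpectrum.valuation_lt_one_iff_mem (K := RatFunc Fq), ← this]

lemma valued_algebraMap_le_one (p : Polynomial Fq) :
    Valued.v (algebraMap (Polynomial Fq) KP p) ≤ 1 :=
  HeightOneSpectrum.coe_mem_adicCompletionIntegers (K := RatFunc Fq) P p

lemma valued_algebraMap_eq_one (hP : P.asIdeal = Ideal.span {f}) {p : Polynomial Fq}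
    (hp : ¬ f ∣ p) : Valued.v (algebraMap (Polynomial Fq) KP p) = 1 :=
  (valued_algebraMap_le_one p).antisymm
    (not_lt.1 (mt (valued_algebraMap_lt_one_iff hP p).1 hp))

lemma valued_algebraMap_eq_exp_neg_one (hP : P.asIdeal = Ideal.span {f}) {p : Polynomial Fq}
    (hp : f ∣ p) (hp' : ¬ f * f ∣ p) :
    Valued.v (algebraMap (Polynomial Fq) KP p) = exp (-1) := by
  obtain ⟨u, rfl⟩ := hp
  have hu : ¬ f ∣ u := fun h => hp' (mul_dvd_mul_left f h)
  have hf0 : f ≠ 0 := by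
    rintro rfl
    exact P.ne_bot (by simpa using hP)
  have hf : Valued.v (algebraMap (Polynomial Fq) KP f) = exp (-1) :=
    (HeightOneSpectrum.valuedAdicCompletion_eq_valuation (K := RatFunc Fq) P f).trans <|
      (HeightOneSpectrum.valuation_of_algebraMap P f).trans
        (HeightOneSpectrum.intValuation_singleton P hf0 hP)
  rw [map_mul, map_mul, hf, valued_algebraMap_eq_one hP hu, mul_one]

/-- For `a` without pole at `f`, a congruence `a ≡ p mod f` is closeness in the completion. -/
lemma valued_sub_lt_one_iff (hP : P.asIdeal = Ideal.span {f}) (a : RatFunc Fq)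
    (ha : ¬ f ∣ a.denom) (p : Polynomial Fq) :
    Valued.v (algebraMap (RatFunc Fq) KP a - algebraMap (Polynomial Fq) KP p) < 1 ↔
      f ∣ a.num - p * a.denom := by
  have hd := valued_algebraMap_eq_one (P := P) hP ha
  have key : (algebraMap (RatFunc Fq) KP a - algebraMap (Polynomial Fq) KP p) *
      algebraMap (Polynomial Fq) KP a.denom =
        algebraMap (Polynomial Fq) KP (a.num - p * a.denom) := by
    have h : a * algebraMap (Polynomial Fq) (RatFunc Fq) a.denom =
        algebraMap (Polynomial Fq) (RatFunc Fq) a.num :=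
      (eq_div_iff (by simpa using a.denom_ne_zero)).1 (RatFunc.num_div_denom a).symm
    have h' := congrArg (algebraMap (RatFunc Fq) KP) h
    rw [map_mul, ← IsScalarTower.algebraMap_apply, ← IsScalarTower.algebraMap_apply] at h'
    rw [sub_mul, h', map_sub, map_mul]
  rw [← valued_algebraMap_lt_one_iff (P := P) hP, ← key, map_mul, hd, mul_one]

lemma valued_le_one (hP : P.asIdeal = Ideal.span {f}) (a : RatFunc Fq)
    (ha : ¬ f ∣ a.denom) : Valued.v (algebraMap (RatFunc Fq) KP a) ≤ 1 := by
  have hd := valued_algebraMap_eq_one (P := P) hP ha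
  have h : a * algebraMap (Polynomial Fq) (RatFunc Fq) a.denom =
      algebraMap (Polynomial Fq) (RatFunc Fq) a.num :=
    (eq_div_iff (by simpa using a.denom_ne_zero)).1 (RatFunc.num_div_denom a).symm
  have h' := congrArg (fun z => Valued.v (algebraMap (RatFunc Fq) KP z)) h
  simp only [map_mul, ← IsScalarTower.algebraMap_apply] at h'
  rw [hd, mul_one] at h'
  exact h' ▸ valued_algebraMap_le_one _

/-- Every integer of the completion is congruent to a polynomial modulo the maximal ideal. -/
lemma exists_polynomial_approx (z : KP) (hz : Valued.v z ≤ 1) :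
    ∃ p : Polynomial Fq, Valued.v (z - algebraMap (Polynomial Fq) KP p) < 1 := by
  have hopen : IsOpen {y : KP | Valued.v (z - y) < 1} := by
    have h1 : IsOpen {y : KP | Valued.v.restrict y < 1} := Valued.isOpen_ball _ _
    have h2 := h1.preimage (continuous_const.sub continuous_id : Continuous fun y : KP => z - y)
    convert h2 using 1
    ext y
    simp [Valuation.restrict_lt_one_iff]
  obtain ⟨r, hr⟩ := (HeightOneSpectrum.denseRange_algebraMap (RatFunc Fq) P).exists_mem_open
    hopen ⟨z, by simp⟩
  have hr1 : Valued.v (algebraMap (RatFunc Fq) KP r) ≤ 1 := by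
    have : algebraMap (RatFunc Fq) KP r = z - (z - algebraMap (RatFunc Fq) KP r) := by ring
    rw [this]
    exact Valuation.map_sub_le _ hz (le_of_lt hr)
  have hv : ∀ k : RatFunc Fq, Valued.v (algebraMap (RatFunc Fq) KP k) =
      P.valuation (RatFunc Fq) k := HeightOneSpectrum.valuedAdicCompletion_eq_valuation' P
  rw [hv] at hr1
  obtain ⟨p, hp⟩ := HeightOneSpectrum.exists_valuation_sub_lt_of_integer P hr1 1
  refine ⟨p, ?_⟩
  rw [← hv, map_sub, ← IsScalarTower.algebraMap_apply] at hp
  have : z - algebraMap (Polynomial Fq) KP p = (z - algebraMap (RatFunc Fq) KP r) -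
    (algebraMap (Polynomial Fq) KP p - algebraMap (RatFunc Fq) KP r) := by ring
  rw [this]
  exact Valuation.map_sub_lt _ hr (by simpa using hp)

/-- If `[a,f) = 1` then `X² + X + a` takes only unit values on integers of the completion. -/
lemma valued_artinSchreier_eq_one [CharP Fq 2] (hP : P.asIdeal = Ideal.span {f}) (a : RatFunc Fq)
    (ha : ¬ f ∣ a.denom) (h : ¬ ∃ x : Polynomial Fq, f ∣ (a.num - (x ^ 2 + x) * a.denom))
    (z : KP) (hz : Valued.v z ≤ 1) :
    Valued.v (z ^ 2 + z + algebraMap (RatFunc Fq) KP a) = 1 := by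
  refine le_antisymm ?_ (not_lt.1 fun hlt => h ?_)
  · refine Valuation.map_add_le _ (Valuation.map_add_le _ ?_ hz) (valued_le_one hP a ha)
    rw [map_pow]
    exact pow_le_one' hz 2
  · obtain ⟨p, hp⟩ := exists_polynomial_approx z hz
    refine ⟨p, ?_⟩
    rw [← valued_sub_lt_one_iff (P := P) hP a ha]
    have : CharP KP 2 := charP_of_injective_algebraMap (algebraMap Fq KP).injective 2
    have h2 : (2 : KP) = 0 := CharTwo.two_eq_zero
    set w := algebraMap (Polynomial Fq) KP p
    have : algebraMap (RatFunc Fq) KP a - algebraMap (Polynomial Fq) KP (p ^ 2 + p) =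
        (z ^ 2 + z + algebraMap (RatFunc Fq) KP a) - (z - w) * (z + w + 1) := by
      rw [map_add, map_pow]
      linear_combination (-w ^ 2 - w) * h2
    rw [this]
    refine Valuation.map_sub_lt _ hlt ?_
    rw [map_mul]
    refine mul_lt_one_of_lt_of_le hp ?_
    exact Valuation.map_add_le _ (Valuation.map_add_le _ hz (valued_algebraMap_le_one p)) (by simp)

/-- If `[a,f) = 0` then `X² + X + a` has a root in the completion. -/
lemma exists_root_of_artinSchreier [CharP Fq 2] (hP : P.asIdeal = Ideal.span {f}) (a : RatFunc Fq)
    (ha : ¬ f ∣ a.denom) (h : ∃ x : Polynomial Fq, f ∣ (a.num - (x ^ 2 + x) * a.denom)) :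
    ∃ y : KP, y ^ 2 + y + algebraMap (RatFunc Fq) KP a = 0 := by
  obtain ⟨p, hp⟩ := h
  have : CharP KP 2 := charP_of_injective_algebraMap (algebraMap Fq KP).injective 2
  refine exists_root_of_approx_root _ (algebraMap (Polynomial Fq) KP p) ?_
  rw [← valued_sub_lt_one_iff (P := P) hP a ha, CharTwo.sub_eq_add, add_comm, map_add (algebraMap _ _),
    map_pow (algebraMap _ _)] at hp
  exact hp

/-- The odd-valuation argument: a form `cN + dM` with `v c = exp (-1)`, `v d = 1` and both
norm forms `N`, `M` anisotropic modulo `f` has only the trivial zero. -/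
lemma eq_zero_of_form_eq_zero [CharP Fq 2] (hP : P.asIdeal = Ideal.span {f}) (a b : RatFunc Fq)
    (ha : ¬ f ∣ a.denom) (hb : ¬ f ∣ b.denom)
    (hna : ¬ ∃ x : Polynomial Fq, f ∣ (a.num - (x ^ 2 + x) * a.denom))
    (hnb : ¬ ∃ x : Polynomial Fq, f ∣ (b.num - (x ^ 2 + x) * b.denom))
    (c d : KP) (hc : Valued.v c = exp (-1)) (hd : Valued.v d = 1) (x y z w : KP)
    (h : c * (x ^ 2 + x * y + algebraMap (RatFunc Fq) KP a * y ^ 2) +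
      d * (z ^ 2 + z * w + algebraMap (RatFunc Fq) KP b * w ^ 2) = 0) :
    (x = 0 ∧ y = 0) ∧ (z = 0 ∧ w = 0) := by
  obtain ⟨s, hs, hs0⟩ := exists_valuation_normForm_eq_sq Valued.v _ (valued_le_one hP a ha)
    (valued_artinSchreier_eq_one hP a ha hna) x y
  obtain ⟨t, ht, ht0⟩ := exists_valuation_normForm_eq_sq Valued.v _ (valued_le_one hP b hb)
    (valued_artinSchreier_eq_one hP b hb hnb) z w
  have hv := congrArg Valued.v (eq_neg_of_add_eq_zero_left h)
  rw [Valuation.map_neg, map_mul, map_mul, hs, ht, hc, hd, one_mul] at hv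
  obtain ⟨h1, h2⟩ := eq_zero_of_exp_neg_one_mul_sq hv
  exact ⟨hs0 h1, ht0 h2⟩

end Place

end LocalField

open IsDedekindDomain

/-- **Local isotropy of the quaternary form at a place of odd valuation of `a₁a₃`.**
Let `K = Fq(t)` with `q = 2^k`, let `a₁, a₃ ∈ Fq[t]` be squarefree and coprime, `a₂, a₄ ∈ K`,
and let `f` be a monic irreducible polynomial, with corresponding place `P`, such that
`v_f(a₁a₃)` is odd and neither `a₂` nor `a₄` has a pole at `f`. Then
`a₁x₁² + a₁x₁x₂ + a₁a₂x₂² + a₃x₃² + a₃x₃x₄ + a₃a₄x₄² = 0` has a nontrivial solution in the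
`f`-adic completion `K_(f)` iff `[a₂,f) = 0` or `[a₄,f) = 0`, i.e. iff `a₂` or `a₄` is congruent
to some `x² + x` modulo `f`. -/
theorem local_isotropy_quaternary_form_odd_place
    (Fq : Type*) [Field Fq] [Fintype Fq] [CharP Fq 2]
    (a₁ a₃ : Polynomial Fq) (hsq₁ : Squarefree a₁) (hsq₃ : Squarefree a₃)
    (hcop : IsCoprime a₁ a₃) (a₂ a₄ : RatFunc Fq)
    (f : Polynomial Fq) (hmonic : f.Monic) (hirr : Irreducible f)
    (P : HeightOneSpectrum (Polynomial Fq)) (hP : P.asIdeal = Ideal.span {f})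
    (hodd : ∃ n : ℕ, Odd n ∧ f ^ n ∣ a₁ * a₃ ∧ ¬ f ^ (n + 1) ∣ a₁ * a₃)
    (hp₂ : ¬ f ∣ a₂.denom) (hp₄ : ¬ f ∣ a₄.denom) :
    (∃ x : Fin 4 → P.adicCompletion (RatFunc Fq), x ≠ 0 ∧
        algebraMap (Polynomial Fq) (P.adicCompletion (RatFunc Fq)) a₁ * (x 0) ^ 2 +
          algebraMap (Polynomial Fq) (P.adicCompletion (RatFunc Fq)) a₁ * (x 0 * x 1) +
          algebraMap (Polynomial Fq) (P.adicCompletion (RatFunc Fq)) a₁ *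
            algebraMap (RatFunc Fq) (P.adicCompletion (RatFunc Fq)) a₂ * (x 1) ^ 2 +
          algebraMap (Polynomial Fq) (P.adicCompletion (RatFunc Fq)) a₃ * (x 2) ^ 2 +
          algebraMap (Polynomial Fq) (P.adicCompletion (RatFunc Fq)) a₃ * (x 2 * x 3) +
          algebraMap (Polynomial Fq) (P.adicCompletion (RatFunc Fq)) a₃ *
            algebraMap (RatFunc Fq) (P.adicCompletion (RatFunc Fq)) a₄ * (x 3) ^ 2 = 0) ↔
      ((∃ x : Polynomial Fq, f ∣ (a₂.num - (x ^ 2 + x) * a₂.denom)) ∨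
        (∃ x : Polynomial Fq, f ∣ (a₄.num - (x ^ 2 + x) * a₄.denom))) := by
  have hff : ¬ IsUnit f := hirr.not_isUnit
  have hf1 : ¬ f * f ∣ a₁ := fun h => hff (hsq₁ f h)
  have hf3 : ¬ f * f ∣ a₃ := fun h => hff (hsq₃ f h)
  constructor
  · rintro ⟨x, hx, hE⟩
    by_contra hcon
    obtain ⟨hn2, hn4⟩ := not_or.1 hcon
    -- an odd exponent is positive, so `f` divides one of the two coefficients
    have hdvd : f ∣ a₁ * a₃ := by
      obtain ⟨n, hn, hd, -⟩ := hodd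
      exact (dvd_pow_self f hn.pos.ne').trans hd
    have hz : (x 0 = 0 ∧ x 1 = 0) ∧ (x 2 = 0 ∧ x 3 = 0) := by
      rcases hirr.prime.dvd_or_dvd hdvd with h1 | h3
      · have h3 : ¬ f ∣ a₃ := fun h3 => hff (hcop.isUnit_of_dvd' h1 h3)
        refine eq_zero_of_form_eq_zero hP a₂ a₄ hp₂ hp₄ hn2 hn4 _ _
          (valued_algebraMap_eq_exp_neg_one hP h1 hf1) (valued_algebraMap_eq_one hP h3) _ _ _ _ ?_
        linear_combination hE
      · have h1 : ¬ f ∣ a₁ := fun h1 => hff (hcop.isUnit_of_dvd' h1 h3)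
        refine (eq_zero_of_form_eq_zero hP a₄ a₂ hp₄ hp₂ hn4 hn2 _ _
          (valued_algebraMap_eq_exp_neg_one hP h3 hf3) (valued_algebraMap_eq_one hP h1)
          _ _ _ _ ?_).symm
        linear_combination hE
    apply hx
    funext i
    fin_cases i
    exacts [hz.1.1, hz.1.2, hz.2.1, hz.2.2]
  · rintro (h | h)
    · obtain ⟨y, hy⟩ := exists_root_of_artinSchreier (P := P) hP a₂ hp₂ h
      refine ⟨![y, 1, 0, 0], fun h0 => one_ne_zero (congrFun h0 1), ?_⟩
      simp only [Matrix.cons_val]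
      linear_combination algebraMap (Polynomial Fq) (P.adicCompletion (RatFunc Fq)) a₁ * hy
    · obtain ⟨y, hy⟩ := exists_root_of_artinSchreier (P := P) hP a₄ hp₄ h
      refine ⟨![0, 0, y, 1], fun h0 => one_ne_zero (congrFun h0 3), ?_⟩
      simp only [Matrix.cons_val]
      linear_combination algebraMap (Polynomial Fq) (P.adicCompletion (RatFunc Fq)) a₃ * hy
end

section
/- Let q = 2^k, K = F_q(t), let f in F_q[t] be a monic irreducible polynomial, K_(f) the f-adic completion of K with valuation ring O_(f), and let r >= 0 be an integer. Let b, c in K_(f) with v_f(b) = 0 and v_f(c) equal to 0 or 1. Then: (i) every solution (x,y) in K_(f)^2 of the equation f^(2r+1) x^2 + f^(2r+1) x y + b y^2 = c f^(2r) lies in O_(f)^2; and (ii) this equation has a solution in K_(f) if and only if it has a solution modulo f^(4r+3), i.e., there exist u, v in O_(f) with v_f( f^(2r+1) u^2 + f^(2r+1) u v + b v^2 - c f^(2r) ) >= 4r + 3. -/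
/-!
The form `Q(x, y) = π^(2r+1) x² + π^(2r+1) x y + b y²`, where `π` is a uniformizer and `b` a unit,
has no cancellation between its terms: `π^(2r+1) x²` has odd valuation, `b y²` has even valuation,
and the valuation of the cross term exceeds the smaller of the two, because twice it is their sum
plus `2r + 1`. So `v(Q(x, y)) = min (2r + 1 + 2 v(x), 2 v(y))` (`valuation_form`). Comparing this
with `v(c π^(2r)) ∈ {2r, 2r + 1}` gives integrality of every solution.

Let now `x`, `y` be integral with `Q(x, y) ≡ c π^(2r)` modulo `π^(4r+3)`. Then `Q(x, y)` and
`c π^(2r)` have the same valuation, so `y` has valuation `r` when `c` is a unit, and `x` is a unit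
when `v(c) = 1`. In the first case one moves `x` to `x + y w`, in the second one moves `y` to
`y + (π^(2r+1) x / b) w`. Either way, exact solvability becomes an Artin-Schreier equation
`w² + w + e = 0` with `v(e) > 0`; the precision `4r + 3` is what guarantees `v(e) > 0`
(`exists_solution_of_approx`). In characteristic two such an equation is solved by the convergent
series `w = ∑ e^(2^n)` (`exists_sq_add_self_add_eq_zero`).

Here `v` is written additively; in the code valuations are multiplicative, so that
`v π = WithZero.exp (-1)` and integral elements are those with `v x ≤ 1`.
-/

open IsDedekindDomain

lemma Valued.nonarchimedeanAddGroup {K : Type*} [Field K]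
    [Valued K (WithZero (Multiplicative ℤ))] : NonarchimedeanAddGroup K where
  is_nonarchimedean U hU := by
    obtain ⟨γ, hγ⟩ := Valued.mem_nhds_zero.1 hU
    exact ⟨⟨Valued.v.restrict.ltAddSubgroup γ, Valued.isOpen_ball K γ.1⟩, hγ⟩

/-- In a complete valued field of characteristic two, the Artin-Schreier equation
`w² + w + e = 0` with `v e < 1` is solved by `w = ∑ e^(2^n)`. -/
lemma exists_sq_add_self_add_eq_zero {K : Type*} [Field K] [Valued K (WithZero (Multiplicative ℤ))]
    [CompleteSpace K] [T2Space K] [CharP K 2] (e : K) (he : Valued.v e < 1) :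
    ∃ w : K, w ^ 2 + w + e = 0 := by
  have h0 : Filter.Tendsto (fun n : ℕ => e ^ 2 ^ n) Filter.atTop (nhds 0) :=
    (Valued.tendsto_zero_pow_of_v_lt_one he).comp
      (tendsto_pow_atTop_atTop_of_one_lt one_lt_two)
  have := Valued.nonarchimedeanAddGroup (K := K)
  have hs : Summable (fun n : ℕ => e ^ 2 ^ n) :=
    NonarchimedeanAddGroup.summable_of_tendsto_cofinite_zero (by rwa [Nat.cofinite_eq_atTop])
  have hS := hs.hasSum
  have hsq : HasSum (fun n : ℕ => e ^ 2 ^ (n + 1)) ((∑' n : ℕ, e ^ 2 ^ n) ^ 2) := by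
    have := hS.map (frobenius K 2) (by
      change Continuous fun x : K => x ^ 2
      fun_prop)
    simpa [Function.comp_def, frobenius_def, ← pow_mul, ← pow_succ] using this
  -- Squaring shifts the series by one index, so its sum `S` satisfies `S² = S - e`.
  have h1 := (hasSum_nat_add_iff' (f := fun n : ℕ => e ^ 2 ^ n) 1).2 hS
  have h2 := hsq.unique h1
  refine ⟨∑' n : ℕ, e ^ 2 ^ n, ?_⟩
  simp only [Finset.range_one, Finset.sum_singleton, pow_zero, pow_one] at h2
  rw [h2]
  linear_combination (∑' n : ℕ, e ^ 2 ^ n) * CharTwo.two_eq_zero (R := K)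

section Form

variable {K : Type*} [Field K] (v : Valuation K (WithZero (Multiplicative ℤ)))

lemma exists_valuation_eq_exp {x : K} (hx : x ≠ 0) : ∃ m : ℤ, v x = WithZero.exp m :=
  ⟨_, (WithZero.exp_log ((Valuation.ne_zero_iff v).2 hx)).symm⟩

lemma exp_pow_nat (m : ℤ) (n : ℕ) : (WithZero.exp m) ^ n = WithZero.exp (n * m) := by
  rw [← WithZero.exp_nsmul, nsmul_eq_mul]

/-- No cancellation occurs in the ramified form: the two square terms have valuations of
different parity, and the cross term has smaller absolute value than the larger of the two. -/
lemma valuation_form {π b : K} (hπ : v π = WithZero.exp (-1)) (hb : v b = 1) (r : ℕ) (x y : K) :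
    v (π ^ (2 * r + 1) * x ^ 2 + π ^ (2 * r + 1) * (x * y) + b * y ^ 2) =
      max (WithZero.exp (-(2 * r + 1 : ℤ)) * v x ^ 2) (v y ^ 2) := by
  have hp : v (π ^ (2 * r + 1)) = WithZero.exp (-(2 * r + 1 : ℤ)) := by
    rw [map_pow, hπ, exp_pow_nat]; congr 1; push_cast; ring
  rcases eq_or_ne x 0 with rfl | hx
  · simp [hb]
  rcases eq_or_ne y 0 with rfl | hy
  · simp only [mul_zero, add_zero, map_mul, map_pow, ne_eq, OfNat.ofNat_ne_zero,
      not_false_eq_true, zero_pow, map_zero, zero_le, sup_of_le_left]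
    rw [← map_pow, hp]
  obtain ⟨m, hm⟩ := exists_valuation_eq_exp v hx
  obtain ⟨n, hn⟩ := exists_valuation_eq_exp v hy
  have h1 : v (π ^ (2 * r + 1) * x ^ 2) = WithZero.exp (-(2 * r + 1 : ℤ) + 2 * m) := by
    rw [map_mul, hp, map_pow, hm, exp_pow_nat, ← WithZero.exp_add]; rfl
  have h2 : v (π ^ (2 * r + 1) * (x * y)) = WithZero.exp (-(2 * r + 1 : ℤ) + (m + n)) := by
    rw [map_mul, hp, map_mul, hm, hn, ← WithZero.exp_add, ← WithZero.exp_add]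
  have h3 : v (b * y ^ 2) = WithZero.exp (2 * n) := by
    rw [map_mul, hb, one_mul, map_pow, hn, exp_pow_nat]; rfl
  have hr : WithZero.exp (-(2 * r + 1 : ℤ)) * v x ^ 2 =
      WithZero.exp (-(2 * r + 1 : ℤ) + 2 * m) := by
    rw [← h1, map_mul, hp, map_pow]
  have hl : v y ^ 2 = WithZero.exp (2 * n) := by
    rw [← h3, map_mul, hb, one_mul, map_pow]
  rw [hr, hl]
  rcases lt_or_gt_of_ne (show -(2 * r + 1 : ℤ) + 2 * m ≠ 2 * n by omega) with h | h
  · rw [max_eq_right (WithZero.exp_le_exp.2 h.le), ← h3]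
    refine Valuation.map_add_eq_of_lt_right v ?_
    rw [h3]
    refine Valuation.map_add_lt v ?_ ?_
    · rw [h1]; exact WithZero.exp_lt_exp.2 h
    · rw [h2]; exact WithZero.exp_lt_exp.2 (by omega)
  · rw [max_eq_left (WithZero.exp_le_exp.2 h.le), ← h1, add_assoc]
    refine Valuation.map_add_eq_of_lt_left v ?_
    rw [h1]
    refine Valuation.map_add_lt v ?_ ?_
    · rw [h2]; exact WithZero.exp_lt_exp.2 (by omega)
    · rw [h3]; exact WithZero.exp_lt_exp.2 h

lemma valuation_le_one_of_form_le {π b : K} (hπ : v π = WithZero.exp (-1)) (hb : v b = 1) (r : ℕ)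
    (x y : K)
    (h : v (π ^ (2 * r + 1) * x ^ 2 + π ^ (2 * r + 1) * (x * y) + b * y ^ 2) ≤
      WithZero.exp (-(2 * r : ℤ))) :
    v x ≤ 1 ∧ v y ≤ 1 := by
  rw [valuation_form v hπ hb, max_le_iff] at h
  obtain ⟨hx, hy⟩ := h
  constructor
  · rcases eq_or_ne x 0 with rfl | h0
    · simp
    obtain ⟨m, hm⟩ := exists_valuation_eq_exp v h0
    rw [hm, exp_pow_nat, ← WithZero.exp_add, WithZero.exp_le_exp] at hx
    rw [hm, ← WithZero.exp_zero, WithZero.exp_le_exp]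
    push_cast at hx
    omega
  · rcases eq_or_ne y 0 with rfl | h0
    · simp
    obtain ⟨m, hm⟩ := exists_valuation_eq_exp v h0
    rw [hm, exp_pow_nat, WithZero.exp_le_exp] at hy
    rw [hm, ← WithZero.exp_zero, WithZero.exp_le_exp]
    push_cast at hy
    omega

/-- A form value of even valuation `2r` comes from the term `b y²`, so `y` has valuation `r`. -/
lemma valuation_eq_of_form_eq_even {π b : K} (hπ : v π = WithZero.exp (-1)) (hb : v b = 1) (r : ℕ)
    (x y : K)
    (h : v (π ^ (2 * r + 1) * x ^ 2 + π ^ (2 * r + 1) * (x * y) + b * y ^ 2) =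
      WithZero.exp (-(2 * r : ℤ))) :
    v y = WithZero.exp (-(r : ℤ)) := by
  rw [valuation_form v hπ hb] at h
  rcases max_choice (WithZero.exp (-(2 * r + 1 : ℤ)) * v x ^ 2) (v y ^ 2) with hc | hc <;>
    rw [hc] at h
  · have h0 : x ≠ 0 := by
      rintro rfl
      rw [map_zero] at h
      simp only [ne_eq, OfNat.ofNat_ne_zero, not_false_eq_true, zero_pow, mul_zero] at h
      exact WithZero.exp_ne_zero h.symm
    obtain ⟨m, hm⟩ := exists_valuation_eq_exp v h0
    rw [hm, exp_pow_nat, ← WithZero.exp_add, WithZero.exp_inj] at h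
    push_cast at h
    omega
  · have h0 : y ≠ 0 := by
      rintro rfl
      rw [map_zero] at h
      simp only [ne_eq, OfNat.ofNat_ne_zero, not_false_eq_true, zero_pow] at h
      exact WithZero.exp_ne_zero h.symm
    obtain ⟨m, hm⟩ := exists_valuation_eq_exp v h0
    rw [hm, exp_pow_nat, WithZero.exp_inj] at h
    rw [hm]
    push_cast at h
    congr 1
    omega

/-- A form value of odd valuation `2r + 1` comes from the term `π^(2r+1) x²`, so `x` is a unit. -/
lemma valuation_eq_of_form_eq_odd {π b : K} (hπ : v π = WithZero.exp (-1)) (hb : v b = 1) (r : ℕ)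
    (x y : K)
    (h : v (π ^ (2 * r + 1) * x ^ 2 + π ^ (2 * r + 1) * (x * y) + b * y ^ 2) =
      WithZero.exp (-(2 * r + 1 : ℤ))) :
    v x = 1 := by
  rw [valuation_form v hπ hb] at h
  rcases max_choice (WithZero.exp (-(2 * r + 1 : ℤ)) * v x ^ 2) (v y ^ 2) with hc | hc <;>
    rw [hc] at h
  · have h0 : x ≠ 0 := by
      rintro rfl
      rw [map_zero] at h
      simp only [ne_eq, OfNat.ofNat_ne_zero, not_false_eq_true, zero_pow, mul_zero] at h
      exact WithZero.exp_ne_zero h.symm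
    obtain ⟨m, hm⟩ := exists_valuation_eq_exp v h0
    rw [hm, exp_pow_nat, ← WithZero.exp_add, WithZero.exp_inj] at h
    rw [hm, ← WithZero.exp_zero]
    push_cast at h
    congr 1
    omega
  · have h0 : y ≠ 0 := by
      rintro rfl
      rw [map_zero] at h
      simp only [ne_eq, OfNat.ofNat_ne_zero, not_false_eq_true, zero_pow] at h
      exact WithZero.exp_ne_zero h.symm
    obtain ⟨m, hm⟩ := exists_valuation_eq_exp v h0
    rw [hm, exp_pow_nat, WithZero.exp_inj] at h
    push_cast at h
    omega

/-- Lifting an approximate solution, given solvability of the Artin-Schreier equations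
`w² + w + e = 0` with `v e < 1`. -/
lemma exists_solution_of_approx [CharP K 2]
    (hAS : ∀ e : K, v e < 1 → ∃ w : K, w ^ 2 + w + e = 0)
    {π b c : K} (hπ : v π = WithZero.exp (-1)) (hb : v b = 1)
    (hc : v c = 1 ∨ v c = WithZero.exp (-1)) (r : ℕ) (x y : K)
    (h : v (π ^ (2 * r + 1) * x ^ 2 + π ^ (2 * r + 1) * (x * y) + b * y ^ 2 - c * π ^ (2 * r)) ≤
      WithZero.exp (-(4 * (r : ℤ) + 3))) :
    ∃ x y : K, π ^ (2 * r + 1) * x ^ 2 + π ^ (2 * r + 1) * (x * y) + b * y ^ 2 =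
      c * π ^ (2 * r) := by
  have h2 : (2 : K) = 0 := CharTwo.two_eq_zero
  have hpow (n : ℕ) : v (π ^ n) = WithZero.exp (-(n : ℤ)) := by
    rw [map_pow, hπ, exp_pow_nat]; congr 1; ring
  have hπ0 : π ≠ 0 := by rintro rfl; rw [map_zero] at hπ; exact WithZero.exp_ne_zero hπ.symm
  have hb0 : b ≠ 0 := by rintro rfl; simp at hb
  have hQ : WithZero.exp (-(4 * (r : ℤ) + 3)) < v (c * π ^ (2 * r)) →
      v (π ^ (2 * r + 1) * x ^ 2 + π ^ (2 * r + 1) * (x * y) + b * y ^ 2) =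
        v (c * π ^ (2 * r)) := by
    intro hlt
    have := Valuation.map_add_eq_of_lt_right v (h.trans_lt hlt)
    rwa [sub_add_cancel] at this
  set E := π ^ (2 * r + 1) * x ^ 2 + π ^ (2 * r + 1) * (x * y) + b * y ^ 2 - c * π ^ (2 * r)
    with hE
  rcases hc with hc | hc
  · have hv : v (c * π ^ (2 * r)) = WithZero.exp (-(2 * r : ℤ)) := by
      rw [map_mul, hc, one_mul, hpow]; push_cast; rfl
    rw [hv] at hQ
    have hy := valuation_eq_of_form_eq_even v hπ hb r x y
      (hQ (WithZero.exp_lt_exp.2 (by omega)))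
    have hy0 : y ≠ 0 := by rintro rfl; rw [map_zero] at hy; exact WithZero.exp_ne_zero hy.symm
    obtain ⟨w, hw⟩ := hAS (E / (π ^ (2 * r + 1) * y ^ 2)) (by
      rw [map_div₀, map_mul, hpow, map_pow, hy, exp_pow_nat, ← WithZero.exp_add]
      refine (div_le_div_of_nonneg_right h zero_le).trans_lt ?_
      rw [← WithZero.exp_sub, ← WithZero.exp_zero, WithZero.exp_lt_exp]
      push_cast
      omega)
    -- In characteristic two, `Q(x + y w, y) = Q(x, y) + π^(2r+1) y² (w² + w)`.
    refine ⟨x + y * w, y, ?_⟩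
    have hw' : π ^ (2 * r + 1) * y ^ 2 * (w ^ 2 + w) + E = 0 := by
      have : π ^ (2 * r + 1) * y ^ 2 ≠ 0 := by positivity
      field_simp at hw
      linear_combination hw
    linear_combination hw' - hE + π ^ (2 * r + 1) * x * y * w * h2
  · have hv : v (c * π ^ (2 * r)) = WithZero.exp (-(2 * r + 1 : ℤ)) := by
      rw [map_mul, hc, hpow, ← WithZero.exp_add]; congr 1; push_cast; ring
    rw [hv] at hQ
    have hx := valuation_eq_of_form_eq_odd v hπ hb r x y
      (hQ (WithZero.exp_lt_exp.2 (by omega)))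
    have hx0 : x ≠ 0 := by rintro rfl; simp at hx
    obtain ⟨w, hw⟩ := hAS (E * b / (π ^ (2 * r + 1) * x) ^ 2) (by
      rw [map_div₀, map_mul, hb, mul_one, map_pow, map_mul, hpow, hx, mul_one, exp_pow_nat]
      refine (div_le_div_of_nonneg_right h zero_le).trans_lt ?_
      rw [← WithZero.exp_sub, ← WithZero.exp_zero, WithZero.exp_lt_exp]
      push_cast
      omega)
    -- With `t = π^(2r+1) x`, characteristic two gives
    -- `Q(x, y + (t / b) w) = Q(x, y) + (t² / b) (w² + w)`.
    refine ⟨x, y + π ^ (2 * r + 1) * x / b * w, ?_⟩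
    have hw' : (π ^ (2 * r + 1) * x) ^ 2 / b * (w ^ 2 + w) + E = 0 := by
      field_simp at hw ⊢
      linear_combination hw
    have key : b * (y + π ^ (2 * r + 1) * x / b * w) ^ 2 =
        b * y ^ 2 + (π ^ (2 * r + 1) * x) ^ 2 / b * w ^ 2 := by
      field_simp
      linear_combination b * y * π ^ (2 * r + 1) * x * w * h2
    rw [key]
    linear_combination hw' - hE

end Form

/-- **Hensel-type criterion for the ramified binary equation, `char = 2`.**
Let `K = Fq(t)` with `q = 2^k`, `f` a monic irreducible polynomial with corresponding place `P`,
`K_(f)` the completion and `O_(f)` its valuation ring, and `r ≥ 0`. Let `b, c ∈ K_(f)` with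
`v_f(b) = 0` and `v_f(c) ∈ {0, 1}` (the valuation takes values `ofAdd (-v_f(·))`). Then
(i) every solution `(x,y) ∈ K_(f)²` of `f^(2r+1)x² + f^(2r+1)xy + by² = cf^(2r)` lies in
`O_(f)²`, and (ii) this equation has a solution in `K_(f)` iff it has a solution modulo
`f^(4r+3)`, i.e. there are `u, v ∈ O_(f)` with
`v_f(f^(2r+1)u² + f^(2r+1)uv + bv² - cf^(2r)) ≥ 4r + 3`. -/
theorem ramified_binary_equation_solvable_iff_solvable_mod_f_pow
    (Fq : Type*) [Field Fq] [Fintype Fq] [CharP Fq 2]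
    (f : Polynomial Fq) (hmonic : f.Monic) (hirr : Irreducible f)
    (P : HeightOneSpectrum (Polynomial Fq)) (hP : P.asIdeal = Ideal.span {f})
    (r : ℕ) (b c : P.adicCompletion (RatFunc Fq))
    (hb : Valued.v b = 1)
    (hc : Valued.v c = 1 ∨
      Valued.v c = ((Multiplicative.ofAdd (-1 : ℤ) : Multiplicative ℤ) :
        WithZero (Multiplicative ℤ))) :
    (∀ x y : P.adicCompletion (RatFunc Fq),
      (algebraMap (Polynomial Fq) (P.adicCompletion (RatFunc Fq)) f) ^ (2 * r + 1) * x ^ 2 +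
        (algebraMap (Polynomial Fq) (P.adicCompletion (RatFunc Fq)) f) ^ (2 * r + 1) * (x * y) +
        b * y ^ 2 =
        c * (algebraMap (Polynomial Fq) (P.adicCompletion (RatFunc Fq)) f) ^ (2 * r) →
      x ∈ P.adicCompletionIntegers (RatFunc Fq) ∧ y ∈ P.adicCompletionIntegers (RatFunc Fq)) ∧
    ((∃ x y : P.adicCompletion (RatFunc Fq),
        (algebraMap (Polynomial Fq) (P.adicCompletion (RatFunc Fq)) f) ^ (2 * r + 1) * x ^ 2 +
          (algebraMap (Polynomial Fq) (P.adicCompletion (RatFunc Fq)) f) ^ (2 * r + 1) * (x * y) +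
          b * y ^ 2 =
          c * (algebraMap (Polynomial Fq) (P.adicCompletion (RatFunc Fq)) f) ^ (2 * r)) ↔
      (∃ u v : P.adicCompletion (RatFunc Fq),
        u ∈ P.adicCompletionIntegers (RatFunc Fq) ∧
        v ∈ P.adicCompletionIntegers (RatFunc Fq) ∧
        Valued.v
            ((algebraMap (Polynomial Fq) (P.adicCompletion (RatFunc Fq)) f) ^ (2 * r + 1) * u ^ 2 +
              (algebraMap (Polynomial Fq) (P.adicCompletion (RatFunc Fq)) f) ^ (2 * r + 1) *
                (u * v) +
              b * v ^ 2 -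
              c * (algebraMap (Polynomial Fq) (P.adicCompletion (RatFunc Fq)) f) ^ (2 * r)) ≤
          ((Multiplicative.ofAdd (-(4 * (r : ℤ) + 3)) : Multiplicative ℤ) :
            WithZero (Multiplicative ℤ)))) := by
  have hf0 : f ≠ 0 := hirr.ne_zero
  have hπ : Valued.v (algebraMap (Polynomial Fq) (P.adicCompletion (RatFunc Fq)) f) =
      WithZero.exp (-1 : ℤ) :=
    (P.valuedAdicCompletion_eq_valuation (K := RatFunc Fq) f).trans
      ((P.valuation_of_algebraMap f).trans (P.intValuation_singleton hf0 hP))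
  have : CharP (P.adicCompletion (RatFunc Fq)) 2 :=
    charP_of_injective_ringHom
      (f := (algebraMap (Polynomial Fq) (P.adicCompletion (RatFunc Fq))).comp Polynomial.C)
      (RingHom.injective _) 2
  generalize algebraMap (Polynomial Fq) (P.adicCompletion (RatFunc Fq)) f = π at *
  have hint : ∀ x y : P.adicCompletion (RatFunc Fq),
      π ^ (2 * r + 1) * x ^ 2 + π ^ (2 * r + 1) * (x * y) + b * y ^ 2 = c * π ^ (2 * r) →
      x ∈ P.adicCompletionIntegers (RatFunc Fq) ∧ y ∈ P.adicCompletionIntegers (RatFunc Fq) := by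
    intro x y h
    refine valuation_le_one_of_form_le Valued.v hπ hb r x y ?_
    have hc1 : Valued.v c ≤ 1 := by
      rcases hc with hc | hc
      · exact hc.le
      · rw [hc, ← WithZero.exp_eq_coe_ofAdd, ← WithZero.exp_zero, WithZero.exp_le_exp]
        norm_num
    rw [h, map_mul, map_pow, hπ, exp_pow_nat]
    refine (mul_le_of_le_one_left' hc1).trans (WithZero.exp_le_exp.2 ?_)
    push_cast
    omega
  refine ⟨hint, ?_, ?_⟩
  · rintro ⟨x, y, h⟩
    refine ⟨x, y, (hint x y h).1, (hint x y h).2, ?_⟩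
    rw [h, sub_self, map_zero]
    exact zero_le
  · rintro ⟨x, y, -, -, h⟩
    exact exists_solution_of_approx Valued.v exists_sq_add_self_add_eq_zero hπ hb hc r x y h
end

section
/- Let q = 2^k, let f_1, ..., f_m be distinct monic irreducible polynomials in F_q[t], let a = f_1 f_2 ... f_m, and let b in F_q[t] be coprime to a such that [b, f_i) = 1 for every i (i.e., for each i, b is not congruent to x^2 + x modulo f_i for any x in F_q[t]). Then for each i, the quadratic form a x^2 + a x y + a b y^2 + z^2 has no nontrivial zero in the f_i-adic completion of F_q(t); equivalently, the quaternion algebra [a,b) over F_q(t) is ramified at f_i. -/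
/-!
Write `N(x, y) = x² + xy + by²`, so that the form is `a N(x, y) + z²`. The hypothesis `[b, fᵢ) = 1`
says that `u² + u + b` has no root in the residue field at `fᵢ`. By density of polynomials among the
`fᵢ`-adic integers, `u² + u + b` is therefore a unit for every integral `u`
(`valued_sq_add_self_add_eq_one`); for non-integral `u` the term `u²` dominates. In both cases the
value of `u² + u + b` is a nonzero square in the value group, hence so is that of `N(x, y)` unless
`x = y = 0`. On the other hand `a` is a product of distinct monic primes, one of which is `fᵢ`, so
it is a uniformizer (`valued_prod_eq_exp_neg_one`). A nontrivial zero would give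
`a N(x, y) = -z²`, with values of opposite parity on the two sides
(`anisotropic_of_residue`).
-/


open IsDedekindDomain

open WithZero in
/-- Parity in the value group `ℤᵐ⁰`: an odd element times a square is a square only if it vanishes. -/
lemma eq_zero_of_exp_neg_one_mul_sq_s16 {c d : ℤᵐ⁰} (h : exp (-1 : ℤ) * c ^ 2 = d ^ 2) : c = 0 := by
  by_contra hc
  have hd : d ≠ 0 := by
    rintro rfl
    simp [hc] at h
  have := congrArg log h
  rw [log_mul exp_ne_zero (pow_ne_zero 2 hc), log_exp, log_pow, log_pow] at this
  simp only [nsmul_eq_mul, Nat.cast_ofNat] at this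
  omega

/-- If `b` is integral and `u² + u + b` is a unit at every integral `u`, then its value at any `u`
is a nonzero square: for non-integral `u` the term `u²` dominates. -/
lemma exists_valuation_eq_sq {L Γ : Type*} [Field L] [LinearOrderedCommGroupWithZero Γ]
    (v : Valuation L Γ) {b : L} (hb : v b ≤ 1)
    (hres : ∀ u, v u ≤ 1 → v (u ^ 2 + u + b) = 1) (u : L) :
    ∃ c, c ≠ 0 ∧ v (u ^ 2 + u + b) = c ^ 2 := by
  rcases le_or_gt (v u) 1 with hu | hu
  · exact ⟨1, one_ne_zero, by rw [hres u hu, one_pow]⟩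
  · have hu2 : v u < v (u ^ 2) := by
      rw [map_pow, sq]
      exact lt_mul_of_one_lt_left (zero_lt_one.trans hu) hu
    refine ⟨v u, (zero_lt_one.trans hu).ne', ?_⟩
    rw [add_assoc, v.map_add_eq_of_lt_left, map_pow]
    exact v.map_add_lt hu2 (hb.trans_lt (hu.trans hu2))

open WithZero in
/-- The form `a N(x, y) + z²` is anisotropic when `a` is a uniformizer and `u² + u + b` has no root
in the residue field. -/
lemma anisotropic_of_residue {L : Type*} [Field L] (v : Valuation L ℤᵐ⁰) {a b : L}
    (ha : v a = exp (-1 : ℤ)) (hb : v b ≤ 1)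
    (hres : ∀ u, v u ≤ 1 → v (u ^ 2 + u + b) = 1) {x y z : L}
    (h : a * x ^ 2 + a * (x * y) + a * b * y ^ 2 + z ^ 2 = 0) :
    x = 0 ∧ y = 0 ∧ z = 0 := by
  have ha0 : a ≠ 0 := by
    rintro rfl
    exact exp_ne_zero (ha.symm.trans v.map_zero)
  have hy : y = 0 := by
    by_contra hy
    obtain ⟨c, hc, hN⟩ := exists_valuation_eq_sq v hb hres (x / y)
    have key : a * ((x / y) ^ 2 + x / y + b) = -(z / y) ^ 2 := by
      field_simp
      linear_combination h
    have hv := congrArg v key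
    rw [map_mul, ha, hN, Valuation.map_neg, map_pow] at hv
    exact hc (eq_zero_of_exp_neg_one_mul_sq_s16 hv)
  subst hy
  have hx : x = 0 := by
    have key : a * x ^ 2 = -z ^ 2 := by linear_combination h
    have hv := congrArg v key
    rw [map_mul, ha, Valuation.map_neg, map_pow, map_pow] at hv
    exact v.zero_iff.1 (eq_zero_of_exp_neg_one_mul_sq_s16 hv)
  subst hx
  refine ⟨rfl, rfl, ?_⟩
  simpa using h

section Completion

variable {R K : Type*} [CommRing R] [IsDedekindDomain R] [Field K] [Algebra R K]
  [IsFractionRing R K] (P : HeightOneSpectrum R)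

lemma valued_algebraMap (r : R) :
    Valued.v (algebraMap R (P.adicCompletion K) r) = P.valuation K (algebraMap R K r) :=
  HeightOneSpectrum.valuedAdicCompletion_eq_valuation' P (algebraMap R K r)

/-- Every integral element of the completion is congruent to an element of `R` modulo the maximal
ideal. -/
lemma exists_valued_algebraMap_sub_lt_one {u : P.adicCompletion K} (hu : Valued.v u ≤ 1) :
    ∃ r : R, Valued.v (algebraMap R (P.adicCompletion K) r - u) < 1 := by
  have hnhds : {y : P.adicCompletion K | Valued.v (y - u) < 1} ∈ nhds u := by
    rw [Valued.mem_nhds]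
    refine ⟨1, fun y hy ↦ ?_⟩
    simpa [Valuation.restrict_lt_one_iff] using hy
  obtain ⟨_, hk, k, rfl⟩ :=
    mem_closure_iff_nhds.1 (HeightOneSpectrum.denseRange_algebraMap K P u) _ hnhds
  have hk : Valued.v (algebraMap K (P.adicCompletion K) k - u) < 1 := hk
  have hk1 : P.valuation K k ≤ 1 := by
    rw [← HeightOneSpectrum.valuedAdicCompletion_eq_valuation' P k]
    have := Valued.v.map_add_le hk.le hu
    rwa [sub_add_cancel] at this
  obtain ⟨r, hr⟩ := P.exists_valuation_sub_lt_of_integer hk1 1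
  refine ⟨r, ?_⟩
  have hr' : Valued.v (algebraMap R (P.adicCompletion K) r -
      algebraMap K (P.adicCompletion K) k) < 1 := by
    rw [IsScalarTower.algebraMap_apply R K (P.adicCompletion K), ← map_sub]
    exact (HeightOneSpectrum.valuedAdicCompletion_eq_valuation' P _).trans_lt hr
  have := Valued.v.map_add_lt hr' hk
  rwa [sub_add_sub_cancel] at this

/-- If `r² + r + b` is a unit at `P` for all global `r`, then it is a unit at all integral elements of
the completion. -/
lemma valued_sq_add_self_add_eq_one {b : R} (hb : ∀ r : R, r ^ 2 + r + b ∉ P.asIdeal)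
    {u : P.adicCompletion K} (hu : Valued.v u ≤ 1) :
    Valued.v (u ^ 2 + u + algebraMap R (P.adicCompletion K) b) = 1 := by
  obtain ⟨r, hr⟩ := exists_valued_algebraMap_sub_lt_one P hu
  set ρ := algebraMap R (P.adicCompletion K) r with hρ
  have hρ1 : Valued.v ρ ≤ 1 := by
    rw [valued_algebraMap]
    exact P.valuation_le_one r
  have hone : Valued.v (ρ ^ 2 + ρ + algebraMap R (P.adicCompletion K) b) = 1 := by
    rw [hρ, ← map_pow, ← map_add, ← map_add, valued_algebraMap,
      HeightOneSpectrum.valuation_eq_one_iff_notMem]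
    exact hb r
  have hdiff : Valued.v ((ρ - u) * (ρ + u + 1)) < 1 := by
    rw [map_mul]
    have h1 : Valued.v (ρ + u + 1) ≤ 1 :=
      Valued.v.map_add_le (Valued.v.map_add_le hρ1 hu) Valued.v.map_one.le
    exact mul_lt_one_of_lt_of_le hr h1
  have : u ^ 2 + u + algebraMap R (P.adicCompletion K) b =
      (ρ ^ 2 + ρ + algebraMap R (P.adicCompletion K) b) - (ρ - u) * (ρ + u + 1) := by ring
  rw [this, Valuation.map_sub_eq_of_lt_left _ (by rwa [hone]), hone]

end Completion

open WithZero in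
lemma valued_prod_eq_exp_neg_one {F : Type*} [Field F] {m : ℕ} {f : Fin m → Polynomial F}
    (hmonic : ∀ i, (f i).Monic) (hirr : ∀ i, Irreducible (f i)) (hdist : Function.Injective f)
    (i : Fin m) (P : HeightOneSpectrum (Polynomial F)) (hP : P.asIdeal = Ideal.span {f i}) :
    Valued.v (algebraMap (Polynomial F) (P.adicCompletion (RatFunc F)) (∏ j, f j)) =
      exp (-1 : ℤ) := by
  rw [valued_algebraMap, HeightOneSpectrum.valuation_of_algebraMap,
    ← Finset.mul_prod_erase _ _ (Finset.mem_univ i), map_mul,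
    P.intValuation_singleton (hirr i).ne_zero hP, map_prod, Finset.prod_eq_one, mul_one]
  intro j hj
  rw [HeightOneSpectrum.intValuation_eq_one_iff, hP, Ideal.mem_span_singleton]
  intro hdvd
  exact Finset.ne_of_mem_erase hj (hdist (Polynomial.eq_of_monic_of_associated (hmonic j) (hmonic i)
    ((hirr i).associated_of_dvd (hirr j) hdvd).symm))

/-- **Ramification of the quaternion algebra `[a,b)` at the primes dividing `a`.**
Let `q = 2^k`, let `f₁, …, fₘ` be distinct monic irreducible polynomials in `Fq[t]`, let
`a = f₁⋯fₘ`, and let `b ∈ Fq[t]` be coprime to `a` with `[b, fᵢ) = 1` for every `i` (i.e. `b` is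
not congruent to any `x² + x` mod `fᵢ`). Then for each `i`, the form
`ax² + axy + aby² + z²` has no nontrivial zero in the `fᵢ`-adic completion of `Fq(t)`;
i.e. the quaternion algebra `[a,b)` is ramified at `fᵢ`. -/
theorem quaternion_char_two_ramified_at_divisors
    (Fq : Type*) [Field Fq] [Fintype Fq] [CharP Fq 2]
    (m : ℕ) (f : Fin m → Polynomial Fq)
    (hmonic : ∀ i, (f i).Monic) (hirr : ∀ i, Irreducible (f i))
    (hdist : Function.Injective f)
    (b : Polynomial Fq) (hcop : IsCoprime b (∏ i, f i))
    (hsym : ∀ i, ¬ ∃ x : Polynomial Fq, f i ∣ (b - (x ^ 2 + x)))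
    (i : Fin m)
    (P : HeightOneSpectrum (Polynomial Fq)) (hP : P.asIdeal = Ideal.span {f i}) :
    ¬ ∃ w : Fin 3 → P.adicCompletion (RatFunc Fq), w ≠ 0 ∧
      algebraMap (Polynomial Fq) (P.adicCompletion (RatFunc Fq)) (∏ j, f j) * (w 0) ^ 2 +
        algebraMap (Polynomial Fq) (P.adicCompletion (RatFunc Fq)) (∏ j, f j) * (w 0 * w 1) +
        algebraMap (Polynomial Fq) (P.adicCompletion (RatFunc Fq)) (∏ j, f j) *
          algebraMap (Polynomial Fq) (P.adicCompletion (RatFunc Fq)) b * (w 1) ^ 2 +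
        (w 2) ^ 2 = 0 := by
  rintro ⟨w, hw, h⟩
  -- In characteristic two, `b - (r² + r) = r² + r + b`.
  have hb : ∀ r : Polynomial Fq, r ^ 2 + r + b ∉ P.asIdeal := by
    intro r hr
    rw [hP, Ideal.mem_span_singleton] at hr
    refine hsym i ⟨r, ?_⟩
    rwa [CharTwo.sub_eq_add, add_comm]
  obtain ⟨h0, h1, h2⟩ := anisotropic_of_residue Valued.v
    (valued_prod_eq_exp_neg_one hmonic hirr hdist i P hP)
    ((valued_algebraMap P b).trans_le (P.valuation_le_one b))
    (fun u hu ↦ valued_sq_add_self_add_eq_one P hb hu) h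
  refine hw (funext fun j ↦ ?_)
  fin_cases j
  exacts [h0, h1, h2]
end

section
/- Let q = 2^k, let a in F_q[t], and let b in F_q[t] be a monic irreducible polynomial not dividing a. Then the quadratic form a x^2 + a x y + a b y^2 + z^2 has a nontrivial zero in the b-adic completion of F_q(t); equivalently, the quaternion algebra [a,b) over F_q(t) is split at the place b. -/
/-!
The form is isotropic because it already vanishes at a point `(x, 1, 0)`: there its value is
`a * (x ^ 2 + x + b)`, so it suffices to solve the Artin–Schreier equation `x ^ 2 + x + b = 0` in
the completion. As `b` has `b`-adic valuation less than one, the series `x = ∑ b ^ (2 ^ n)`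
converges; squaring is additive and continuous in characteristic two, so `x ^ 2` is the same series
without its first term `b`, and `x = b + x ^ 2`.
-/

open IsDedekindDomain

open Filter Topology in
/-- In a complete valued field of characteristic two, the Artin–Schreier equation
`x ^ 2 + x + c = 0` is solvable whenever `c` is topologically nilpotent. -/
theorem exists_sq_add_self_add_eq_zero_s17 {L Γ : Type*} [Field L]
    [LinearOrderedCommGroupWithZero Γ] [Valued L Γ] [CompleteSpace L] [T2Space L] [CharP L 2]
    (c : L) (hc : Tendsto (fun n : ℕ => c ^ n) atTop (𝓝 0)) :
    ∃ x : L, x ^ 2 + x + c = 0 := by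
  -- The open balls centred at the origin are additive subgroups.
  have : NonarchimedeanRing L :=
    { is_nonarchimedean := fun U hU => by
        obtain ⟨γ, hγ⟩ := Valued.mem_nhds_zero.mp hU
        exact ⟨⟨Valuation.ltAddSubgroup (Valued.v : Valuation L Γ).restrict γ,
          Valued.isOpen_ball L _⟩, hγ⟩ }
  have hs : Summable fun n : ℕ => c ^ 2 ^ n := by
    apply NonarchimedeanAddGroup.summable_of_tendsto_cofinite_zero
    rw [Nat.cofinite_eq_atTop]
    exact hc.comp (tendsto_pow_atTop_atTop_of_one_lt one_lt_two)
  have hsq : (∑' n : ℕ, c ^ 2 ^ n) ^ 2 = ∑' n : ℕ, c ^ 2 ^ (n + 1) := by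
    have h := hs.hasSum.map (frobenius L 2) (continuous_pow 2)
    simpa [Function.comp_def, frobenius_def, ← pow_mul, ← pow_succ] using h.tsum_eq.symm
  refine ⟨∑' n : ℕ, c ^ 2 ^ n, ?_⟩
  have h0 := hs.tsum_eq_zero_add
  rw [← hsq, pow_zero, pow_one] at h0
  have h2 : (2 : L) = 0 := CharTwo.two_eq_zero
  linear_combination h0 + ((∑' n : ℕ, c ^ 2 ^ n) ^ 2 + c) * h2

/-- **The quaternion algebra `[a,b)` is split at the place `b`.**
Let `q = 2^k`, `a ∈ Fq[t]`, and let `b ∈ Fq[t]` be a monic irreducible polynomial not dividing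
`a`. Then the quadratic form `ax² + axy + aby² + z²` has a nontrivial zero in the `b`-adic
completion of `Fq(t)`; i.e. the quaternion algebra `[a,b)` over `Fq(t)` is split at `b`. -/
theorem quaternion_char_two_split_at_b
    (Fq : Type*) [Field Fq] [Fintype Fq] [CharP Fq 2]
    (a b : Polynomial Fq) (hmonic : b.Monic) (hirr : Irreducible b) (hnd : ¬ b ∣ a)
    (P : HeightOneSpectrum (Polynomial Fq)) (hP : P.asIdeal = Ideal.span {b}) :
    ∃ w : Fin 3 → P.adicCompletion (RatFunc Fq), w ≠ 0 ∧
      algebraMap (Polynomial Fq) (P.adicCompletion (RatFunc Fq)) a * (w 0) ^ 2 +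
        algebraMap (Polynomial Fq) (P.adicCompletion (RatFunc Fq)) a * (w 0 * w 1) +
        algebraMap (Polynomial Fq) (P.adicCompletion (RatFunc Fq)) a *
          algebraMap (Polynomial Fq) (P.adicCompletion (RatFunc Fq)) b * (w 1) ^ 2 +
        (w 2) ^ 2 = 0 := by
  set L := P.adicCompletion (RatFunc Fq)
  have : CharP (RatFunc Fq) 2 :=
    charP_of_injective_algebraMap (algebraMap Fq (RatFunc Fq)).injective 2
  have : CharP L 2 := charP_of_injective_algebraMap (algebraMap (RatFunc Fq) L).injective 2
  have hv : Valued.v (algebraMap (Polynomial Fq) L b) < 1 := by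
    rw [IsScalarTower.algebraMap_apply (Polynomial Fq) (RatFunc Fq) L]
    change Valued.v ((algebraMap (Polynomial Fq) (RatFunc Fq) b : RatFunc Fq) : L) < 1
    rw [HeightOneSpectrum.adicCompletion.valued_coe, HeightOneSpectrum.valuation_lt_one_iff_mem, hP]
    exact Ideal.mem_span_singleton_self b
  obtain ⟨x, hx⟩ := exists_sq_add_self_add_eq_zero_s17 (algebraMap (Polynomial Fq) L b)
    (Valued.tendsto_zero_pow_of_v_lt_one hv)
  refine ⟨![x, 1, 0], fun h => one_ne_zero (congrFun h 1), ?_⟩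
  simp only [Matrix.cons_val]
  linear_combination algebraMap (Polynomial Fq) L a * hx
end
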